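/- arXiv:2103.14316 — 2 statements merged into one kernel-verified Lean document; each statement's English description precedes it below -/
import Mathlib

section
/- Let p₁, …, pₙ be primes greater than 5 and q_i = p_i^{f_i} prime powers such that for each i, |π(q_i − 1) \ {2,3}| = |π(q_i + 1) \ {2,3}| = 1, and for distinct r, s the sets ({p_r} ∪ π(q_r² − 1)) and ({p_s} ∪ π(q_s² − 1)) intersect exactly in {2,3}. Then for G = PSL(2,q₁) × ⋯ × PSL(2,qₙ), one has |ρ(G)| = 3n + 2 and σ(G) = n + 2; in particular |ρ(G)| = 3σ(G) − 4. -/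
/-- The set of degrees of the irreducible complex characters of `G`. -/
noncomputable def charDegrees (G : Type) [Group G] : Set ℕ :=
  {n | ∃ V : FDRep ℂ G, CategoryTheory.Simple V ∧ n = Module.finrank ℂ V}

/-- `ρ(G)`: the set of primes dividing some irreducible character degree of `G`. -/
noncomputable def rhoSet (G : Type) [Group G] : Set ℕ :=
  {p | p.Prime ∧ ∃ n ∈ charDegrees G, p ∣ n}

/-- `σ(G)`: the maximal number of distinct primes dividing an irreducible
character degree of `G`. -/
noncomputable def sigmaVal (G : Type) [Group G] : ℕ :=
  sSup {k | ∃ n ∈ charDegrees G, k = n.primeFactors.card}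


open Module

/-- Elementary irreducibility. -/
def IrrRep {G V : Type} [Group G] [AddCommGroup V] [Module ℂ V]
    (ρ : Representation ℂ G V) : Prop :=
  Nontrivial V ∧ ∀ W : Submodule ℂ V, (∀ g, ∀ v ∈ W, ρ g v ∈ W) → W = ⊥ ∨ W = ⊤

lemma IrrRep.isIrreducible {G V : Type} [Group G] [AddCommGroup V] [Module ℂ V]
    {ρ : Representation ℂ G V} (h : IrrRep ρ) : ρ.IsIrreducible := by
  have := h.1
  have hnt : Nontrivial (Subrepresentation ρ) := by
    refine ⟨⊥, ⊤, fun hh => ?_⟩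
    have := congrArg Subrepresentation.toSubmodule hh
    exact bot_ne_top (α := Submodule ℂ V) this
  refine { eq_bot_or_eq_top := fun W => ?_ }
  rcases h.2 W.toSubmodule (fun g v hv => W.apply_mem_toSubmodule g hv) with h | h
  · left; exact Subrepresentation.toSubmodule_injective h
  · right; exact Subrepresentation.toSubmodule_injective h

lemma IrrRep.span_orbit {G V : Type} [Group G] [AddCommGroup V] [Module ℂ V]
    {ρ : Representation ℂ G V} (h : IrrRep ρ) {v : V} (hv : v ≠ 0) :
    Submodule.span ℂ (Set.range fun g => ρ g v) = ⊤ := by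
  have hinv : ∀ g, ∀ x ∈ Submodule.span ℂ (Set.range fun g => ρ g v),
      ρ g x ∈ Submodule.span ℂ (Set.range fun g => ρ g v) := by
    intro g x hx
    induction hx using Submodule.span_induction with
    | mem x hx =>
      obtain ⟨k, rfl⟩ := hx
      exact Submodule.subset_span ⟨g * k, by simp⟩
    | zero => simp
    | add x y _ _ hx hy => rw [map_add]; exact add_mem hx hy
    | smul c x _ hx => rw [map_smul]; exact Submodule.smul_mem _ _ hx
  rcases h.2 (Submodule.span ℂ (Set.range fun g => ρ g v)) hinv with h | h
  · exfalso
    apply hv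
    have : v ∈ Submodule.span ℂ (Set.range fun g => ρ g v) :=
      Submodule.subset_span ⟨1, by simp⟩
    rw [h] at this
    simpa using this
  · exact h

/-- Burnside's theorem. -/
lemma IrrRep.burnside {G V : Type} [Group G] [AddCommGroup V] [Module ℂ V]
    [FiniteDimensional ℂ V]
    {ρ : Representation ℂ G V} (h : IrrRep ρ) :
    Submodule.span ℂ (Set.range fun g => (ρ g : V →ₗ[ℂ] V)) = ⊤ := by
  classical
  let A : Subalgebra ℂ (Module.End ℂ V) := Algebra.adjoin ℂ (Set.range fun g => (ρ g : Module.End ℂ V))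
  have hA : Subalgebra.toSubmodule A = Submodule.span ℂ (Set.range fun g => (ρ g : V →ₗ[ℂ] V)) := by
    rw [Algebra.adjoin_eq_span]
    have : (Set.range fun g => (ρ g : Module.End ℂ V)) = (MonoidHom.mrange ρ : Set (Module.End ℂ V)) := by
      ext; simp
    rw [this, Submonoid.closure_eq]
  have hnt := h.1
  have hS : IsSimpleModule A V := by
    rw [isSimpleModule_iff]
    refine { exists_pair_ne := ⟨⊥, ⊤, bot_ne_top⟩, eq_bot_or_eq_top := fun W => ?_ }
    have hinv : ∀ g, ∀ v ∈ W.restrictScalars ℂ, ρ g v ∈ W.restrictScalars ℂ := by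
      intro g v hv
      exact W.smul_mem (⟨ρ g, Algebra.subset_adjoin ⟨g, rfl⟩⟩ : A) hv
    rcases h.2 (W.restrictScalars ℂ) hinv with h | h
    · left; simpa using h
    · right; simpa using h
  rw [← hA, eq_top_iff]
  intro f _
  have hb := IsSimpleModule.algebraMap_end_bijective_of_isAlgClosed (A := A) (V := V) ℂ
  let f' : Module.End (Module.End A V) V :=
    { toFun := f, map_add' := f.map_add, map_smul' := by
        intro φ v
        obtain ⟨c, rfl⟩ := hb.2 φ
        simp }
  obtain ⟨r, hr⟩ := jacobson_density (R := A) f' (Finset.univ.image (Module.finBasis ℂ V))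
  have : f = r.1 := by
    refine (Module.finBasis ℂ V).ext fun i => ?_
    exact hr _ (by simp)
  rw [this]
  exact r.2

/-- Maschke: invariant complements. -/
lemma maschke {G V : Type} [Group G] [Finite G] [AddCommGroup V] [Module ℂ V]
    (ρ : Representation ℂ G V) (W : Submodule ℂ V) (hW : ∀ g, ∀ v ∈ W, ρ g v ∈ W) :
    ∃ W' : Submodule ℂ V, (∀ g, ∀ v ∈ W', ρ g v ∈ W') ∧ IsCompl W W' := by
  have : Representation.IsSemisimpleRepresentation ρ := by infer_instance
  obtain ⟨X, hX⟩ := exists_isCompl (⟨W, hW⟩ : Subrepresentation ρ)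
  refine ⟨X.toSubmodule, fun g v hv => X.apply_mem_toSubmodule g hv, ?_⟩
  constructor
  · rw [disjoint_iff]
    exact congrArg Subrepresentation.toSubmodule hX.inf_eq_bot
  · rw [codisjoint_iff]
    exact congrArg Subrepresentation.toSubmodule hX.sup_eq_top

/-- Restriction of a representation to an invariant subspace. -/
def subRep {G V : Type} [Group G] [AddCommGroup V] [Module ℂ V]
    (ρ : Representation ℂ G V) (W : Submodule ℂ V) (hW : ∀ g, ∀ v ∈ W, ρ g v ∈ W) :
    Representation ℂ G W :=
  Subrepresentation.toRepresentation (⟨W, hW⟩ : Subrepresentation ρ)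

@[simp] lemma subRep_coe {G V : Type} [Group G] [AddCommGroup V] [Module ℂ V]
    (ρ : Representation ℂ G V) (W : Submodule ℂ V) (hW : ∀ g, ∀ v ∈ W, ρ g v ∈ W) (g : G) (v : W) :
    (subRep ρ W hW g v : V) = ρ g v := rfl

/-- If an operator is nonzero on an invariant subspace `N`, and preserves invariant subspaces,
then some irreducible subspace is not killed by it. -/
lemma exists_irr_sub {G V : Type} [Group G] [Finite G] [AddCommGroup V] [Module ℂ V]
    [FiniteDimensional ℂ V] (ρ : Representation ℂ G V) (a : V →ₗ[ℂ] V)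
    (N : Submodule ℂ V) (hN : ∀ g, ∀ v ∈ N, ρ g v ∈ N) (ha : ∃ v ∈ N, a v ≠ 0) :
    ∃ (W : Submodule ℂ V) (hW : ∀ g, ∀ v ∈ W, ρ g v ∈ W), W ≤ N ∧ IrrRep (subRep ρ W hW) ∧
      ∃ v ∈ W, a v ≠ 0 := by
  induction hd : finrank ℂ N using Nat.strong_induction_on generalizing N with
  | _ d ih =>
  by_cases hirr : IrrRep (subRep ρ N hN)
  · exact ⟨N, hN, le_rfl, hirr, ha⟩
  · obtain ⟨v, hv, hav⟩ := ha
    have hnt : Nontrivial N := ⟨⟨v, hv⟩, 0, fun h => hav (by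
      have : v = 0 := congrArg Subtype.val h
      simp [this])⟩
    rw [IrrRep, not_and] at hirr
    have := hirr hnt
    push Not at this
    obtain ⟨X, hX, hX1, hX2⟩ := this
    obtain ⟨Y, hY, hXY⟩ := maschke (subRep ρ N hN) X hX
    have hY2 : Y ≠ ⊤ := by
      rintro rfl
      exact hX1 (by simpa using hXY.inf_eq_bot)
    have key : ∀ Z : Submodule ℂ N, (∀ g, ∀ v ∈ Z, subRep ρ N hN g v ∈ Z) → Z ≠ ⊤ →
        (∃ v ∈ Z, a v ≠ 0) → ∃ (W : Submodule ℂ V) (hW : ∀ g, ∀ v ∈ W, ρ g v ∈ W), W ≤ N ∧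
          IrrRep (subRep ρ W hW) ∧ ∃ v ∈ W, a v ≠ 0 := by
      intro Z hZ hZt ⟨z, hz, haz⟩
      have hlt : finrank ℂ (Z.map N.subtype) < d := by
        rw [← hd, ← LinearEquiv.finrank_eq (Submodule.equivMapOfInjective N.subtype N.injective_subtype Z)]
        exact Submodule.finrank_lt hZt
      have hinv : ∀ g, ∀ v ∈ Z.map N.subtype, ρ g v ∈ Z.map N.subtype := by
        rintro g _ ⟨v, hv, rfl⟩
        exact ⟨_, hZ g v hv, rfl⟩
      obtain ⟨W, hW, hWN, h1, h2⟩ := ih _ hlt _ hinv ⟨z, ⟨z, hz, rfl⟩, haz⟩ rfl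
      exact ⟨W, hW, hWN.trans (Submodule.map_subtype_le N Z), h1, h2⟩
    have hmem : (⟨v, hv⟩ : N) ∈ X ⊔ Y := by rw [hXY.sup_eq_top]; trivial
    obtain ⟨x, hx, y, hy, hxy⟩ := Submodule.mem_sup.1 hmem
    by_cases hax : a x = 0
    · refine key Y hY hY2 ⟨y, hy, fun hay => hav ?_⟩
      have : v = x + y := by rw [← Submodule.coe_add, hxy]
      rw [this, map_add, hax, hay, add_zero]
    · exact key X hX hX2 ⟨x, hx, hax⟩

/-- `d` is the dimension of an irreducible representation. -/
def HasDeg (G : Type) [Group G] (d : ℕ) : Prop :=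
  ∃ (V : Type) (_ : AddCommGroup V) (_ : Module ℂ V) (_ : FiniteDimensional ℂ V)
    (ρ : Representation ℂ G V), IrrRep ρ ∧ finrank ℂ V = d

open CategoryTheory in
lemma mem_charDegrees_iff {G : Type} [Group G] (d : ℕ) : d ∈ charDegrees G ↔ HasDeg G d := by
  constructor
  · rintro ⟨V, hV, rfl⟩
    refine ⟨V, inferInstance, inferInstance, inferInstance, V.ρ, ⟨?_, ?_⟩, rfl⟩
    · by_contra hcon
      rw [not_nontrivial_iff_subsingleton] at hcon
      apply Simple.not_isZero V
      rw [Limits.IsZero.iff_id_eq_zero]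
      ext x
      exact Subsingleton.elim (α := V) _ _
    · intro W hW
      let Y : FDRep ℂ G := FDRep.of (subRep V.ρ W hW)
      let i : Y ⟶ V := ⟨FGModuleCat.ofHom W.subtype, fun g => by ext x; rfl⟩
      have hmono : Mono i := by
        refine ⟨fun {Z} f g hfg => ?_⟩
        ext x
        have : (f ≫ i).hom x = (g ≫ i).hom x := by rw [hfg]
        exact this
      by_cases hi : i = 0
      · left
        rw [eq_bot_iff]
        intro x hx
        have : i.hom (⟨x, hx⟩ : W) = 0 := by rw [hi]; rfl
        exact this
      · right
        have hiso : IsIso i := (Simple.mono_isIso_iff_nonzero i).2 hi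
        rw [eq_top_iff]
        intro x _
        have : (inv i ≫ i).hom x = x := by simp
        rw [← this]
        exact ((inv i).hom x : W).2
  · rintro ⟨V, _, _, _, ρ, hρ, rfl⟩
    refine ⟨FDRep.of ρ, ?_, rfl⟩
    constructor
    intro Y f hf
    constructor
    · intro hiso h0
      subst h0
      have := hρ.1
      obtain ⟨x, hx⟩ := exists_ne (0 : V)
      apply hx
      have : (inv (0 : Y ⟶ FDRep.of ρ) ≫ (0 : Y ⟶ FDRep.of ρ)).hom x = x := by
        rw [IsIso.inv_hom_id]; rfl
      rw [← this]
      simp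
      rfl
    · intro hne
      let φ : Y →ₗ[ℂ] V := f.hom.hom.hom
      have hφ : ∀ g y, φ (Y.ρ g y) = ρ g (φ y) := by
        intro g y
        have := f.comm g
        exact congrArg (fun k => k.hom.hom y) this
      have hker : LinearMap.ker φ = ⊥ := by
        let K := LinearMap.ker φ
        have hK : ∀ g, ∀ v ∈ K, Y.ρ g v ∈ K := by
          intro g v hv
          rw [LinearMap.mem_ker] at hv ⊢
          rw [hφ, hv, map_zero]
        let j : FDRep.of (subRep Y.ρ K hK) ⟶ Y := ⟨FGModuleCat.ofHom K.subtype, fun g => by ext x; rfl⟩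
        have h1 : j ≫ f = 0 ≫ f := by
          ext x
          have : φ (x : K) = 0 := (x : K).2
          rw [Limits.zero_comp]
          exact this
        have h2 : j = 0 := (cancel_mono f).1 h1
        rw [eq_bot_iff]
        intro x hx
        have : j.hom (⟨x, hx⟩ : K) = 0 := by rw [h2]; rfl
        exact this
      have hran : LinearMap.range φ = ⊤ := by
        rcases hρ.2 (LinearMap.range φ) (by
          rintro g _ ⟨y, rfl⟩
          exact ⟨Y.ρ g y, hφ g y⟩) with h | h
        · exfalso
          apply hne
          rw [LinearMap.range_eq_bot] at h
          ext x
          exact congrArg (fun k => k x) h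
        · exact h
      let e : Y ≃ₗ[ℂ] V := LinearEquiv.ofBijective φ
        ⟨LinearMap.ker_eq_bot.1 hker, LinearMap.range_eq_top.1 hran⟩
      let E : Y.V ≅ (FDRep.of ρ).V := LinearEquiv.toFGModuleCatIso e
      have : IsIso f.hom := by
        have h3 : f.hom = E.hom := by
          ext x
          rfl
        rw [h3]
        infer_instance
      exact Action.isIso_of_hom_isIso f

open Module

open scoped TensorProduct in
lemma HasDeg.prod {G H : Type} [Group G] [Group H] {a b : ℕ} (hG : HasDeg G a) (hH : HasDeg H b) :
    HasDeg (G × H) (a * b) := by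
  obtain ⟨A, _, _, _, ρ, hρ, rfl⟩ := hG
  obtain ⟨B, _, _, _, σ, hσ, rfl⟩ := hH
  let τ : Representation ℂ (G × H) (A ⊗[ℂ] B) :=
    { toFun := fun x => TensorProduct.map (ρ x.1) (σ x.2)
      map_one' := by
        simp only [Prod.fst_one, Prod.snd_one, map_one]
        exact TensorProduct.map_id
      map_mul' := fun x y => by
        simp only [Prod.fst_mul, Prod.snd_mul, map_mul]
        exact TensorProduct.map_mul _ _ _ _ }
  have hA := hρ.1
  have hB := hσ.1
  refine ⟨A ⊗[ℂ] B, inferInstance, inferInstance, inferInstance, τ, ⟨?_, ?_⟩, ?_⟩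
  · apply nontrivial_of_finrank_pos (R := ℂ)
    rw [finrank_tensorProduct]
    exact Nat.mul_pos finrank_pos finrank_pos
  · intro W hW
    let P : Submodule ℂ ((A ⊗[ℂ] B) →ₗ[ℂ] (A ⊗[ℂ] B)) :=
      { carrier := {f | ∀ w ∈ W, f w ∈ W}
        add_mem' := fun hf hg w hw => W.add_mem (hf w hw) (hg w hw)
        zero_mem' := fun w hw => W.zero_mem
        smul_mem' := fun c f hf w hw => W.smul_mem c (hf w hw) }
    have h1 : ∀ (g : G) (k : B →ₗ[ℂ] B), TensorProduct.map (ρ g) k ∈ P := by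
      intro g k
      have hk : k ∈ Submodule.span ℂ (Set.range fun g => (σ g : B →ₗ[ℂ] B)) := by
        rw [hσ.burnside]; trivial
      induction hk using Submodule.span_induction with
      | mem k hk =>
        obtain ⟨h, rfl⟩ := hk
        exact hW (g, h)
      | zero => rw [TensorProduct.map_zero_right]; exact P.zero_mem
      | add x y _ _ hx hy => rw [TensorProduct.map_add_right]; exact P.add_mem hx hy
      | smul c x _ hx => rw [TensorProduct.map_smul_right]; exact P.smul_mem c hx
    have h2 : ∀ (f : A →ₗ[ℂ] A) (k : B →ₗ[ℂ] B), TensorProduct.map f k ∈ P := by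
      intro f k
      have hk : f ∈ Submodule.span ℂ (Set.range fun g => (ρ g : A →ₗ[ℂ] A)) := by
        rw [hρ.burnside]; trivial
      induction hk using Submodule.span_induction with
      | mem f hk =>
        obtain ⟨h, rfl⟩ := hk
        exact h1 h k
      | zero => rw [TensorProduct.map_zero_left]; exact P.zero_mem
      | add x y _ _ hx hy => rw [TensorProduct.map_add_left]; exact P.add_mem hx hy
      | smul c x _ hx => rw [TensorProduct.map_smul_left]; exact P.smul_mem c hx
    have h3 : ∀ f : (A ⊗[ℂ] B) →ₗ[ℂ] (A ⊗[ℂ] B), f ∈ P := by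
      intro f
      obtain ⟨z, rfl⟩ := (homTensorHomEquiv ℂ A B A B).surjective f
      induction z using TensorProduct.induction_on with
      | zero => rw [map_zero]; exact P.zero_mem
      | tmul x y => simpa using h2 x y
      | add x y hx hy => rw [map_add]; exact P.add_mem hx hy
    by_cases hb : W = ⊥
    · left; exact hb
    · right
      obtain ⟨w, hw, hw0⟩ := Submodule.exists_mem_ne_zero_of_ne_bot hb
      rw [eq_top_iff]
      intro x _
      obtain ⟨φ, hφ⟩ := Module.Projective.exists_dual_eq_one ℂ hw0
      have := h3 (φ.smulRight x) w hw
      simpa [hφ] using this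
  · exact finrank_tensorProduct ..

lemma finrank_span_hom {H V B : Type} [Group H] [AddCommGroup V] [Module ℂ V]
    [FiniteDimensional ℂ V] [AddCommGroup B] [Module ℂ B] [FiniteDimensional ℂ B]
    (τ : Representation ℂ H V) (σ : Representation ℂ H B) (hσ : IrrRep σ)
    (M : Submodule ℂ (B →ₗ[ℂ] V)) (hM : ∀ m ∈ M, ∀ h b, m (σ h b) = τ h (m b)) :
    finrank ℂ (Submodule.span ℂ {v | ∃ m ∈ M, ∃ b, v = m b}) = finrank ℂ M * finrank ℂ B := by
  classical
  let bm := Module.finBasis ℂ M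
  let bb := Module.finBasis ℂ B
  let F : Fin (finrank ℂ M) × Fin (finrank ℂ B) → V := fun ij => (bm ij.1).1 (bb ij.2)
  have hspan : Submodule.span ℂ {v | ∃ m ∈ M, ∃ b, v = m b} = Submodule.span ℂ (Set.range F) := by
    apply le_antisymm
    · rw [Submodule.span_le]
      rintro _ ⟨m, hm, b, rfl⟩
      have e1 : m = ∑ i, bm.repr ⟨m, hm⟩ i • (bm i).1 := by
        have h5 := congrArg Subtype.val (bm.sum_repr ⟨m, hm⟩)
        rw [Submodule.coe_sum] at h5
        exact h5.symm
      rw [e1, ← bb.sum_repr b]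
      simp only [map_sum, map_smul, LinearMap.sum_apply, LinearMap.smul_apply]
      refine Submodule.sum_mem _ fun j _ => Submodule.smul_mem _ _ (Submodule.sum_mem _ fun i _ =>
        Submodule.smul_mem _ _ (Submodule.subset_span ⟨(i, j), rfl⟩))
    · rw [Submodule.span_le]
      rintro _ ⟨ij, rfl⟩
      exact Submodule.subset_span ⟨_, (bm ij.1).2, _, rfl⟩
  have hind : LinearIndependent ℂ F := by
    rw [Fintype.linearIndependent_iff]
    intro c hc
    let nn : Fin (finrank ℂ B) → M := fun j => ∑ i, c (i, j) • bm i
    have h0 : ∑ j, (nn j).1 (bb j) = 0 := by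
      rw [← hc, Fintype.sum_prod_type_right]
      refine Finset.sum_congr rfl fun j _ => ?_
      simp [nn, F]
    have h1 : ∀ k : B →ₗ[ℂ] B, ∑ j, (nn j).1 (k (bb j)) = 0 := by
      intro k
      have hk : k ∈ Submodule.span ℂ (Set.range fun g => (σ g : B →ₗ[ℂ] B)) := by
        rw [hσ.burnside]; trivial
      induction hk using Submodule.span_induction with
      | mem k hk =>
        obtain ⟨h, rfl⟩ := hk
        have : ∀ j, (nn j).1 (σ h (bb j)) = τ h ((nn j).1 (bb j)) := fun j => hM _ (nn j).2 _ _
        simp only [this]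
        rw [← map_sum, h0, map_zero]
      | zero => simp
      | add x y _ _ hx hy => simp [Finset.sum_add_distrib, hx, hy]
      | smul c x _ hx => simp [← Finset.smul_sum, hx]
    have h2 : ∀ j, nn j = 0 := by
      intro j
      apply Subtype.ext
      ext b
      have := h1 (bb.constr ℂ (fun j' => if j' = j then b else 0))
      simpa [Basis.constr_basis, apply_ite] using this
    rintro ⟨i, j⟩
    have := Fintype.linearIndependent_iff.1 bm.linearIndependent (fun i => c (i, j)) (h2 j) i
    exact this
  rw [hspan, finrank_span_eq_card hind]
  simp

lemma HasDeg.of_prod {G H : Type} [Group G] [Group H] [Finite G] [Finite H] {d : ℕ}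
    (h : HasDeg (G × H) d) :
    ∃ a b, HasDeg G a ∧ HasDeg H b ∧ d = a * b := by
  obtain ⟨V, _, _, _, ρ, hρ, rfl⟩ := h
  let τ : Representation ℂ H V := ρ.comp (MonoidHom.inr G H)
  have hV := hρ.1
  obtain ⟨v0, hv0⟩ := exists_ne (0 : V)
  obtain ⟨B, hB, -, hirr, v, hvB, hv⟩ := exists_irr_sub τ LinearMap.id ⊤ (by simp)
    ⟨v0, trivial, hv0⟩
  let σ := subRep τ B hB
  let M : Submodule ℂ (B →ₗ[ℂ] V) :=
    { carrier := {m | ∀ h b, m (σ h b) = τ h (m b)}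
      add_mem' := fun hf hg h b => by simp [hf h b, hg h b]
      zero_mem' := fun h b => by simp
      smul_mem' := fun c f hf h b => by simp [hf h b] }
  have hcomm : ∀ g h x, ρ (g, 1) (ρ (1, h) x) = ρ (1, h) (ρ (g, 1) x) := by
    intro g h x
    rw [← Module.End.mul_apply, ← Module.End.mul_apply, ← map_mul, ← map_mul]
    simp
  let θ : Representation ℂ G M :=
    { toFun := fun g =>
        { toFun := fun m => ⟨(ρ (g, 1)) ∘ₗ m.1, fun h b => by
            have := m.2 h b
            simp only [LinearMap.comp_apply]
            rw [this]
            exact hcomm g h _⟩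
          map_add' := fun x y => by ext; simp
          map_smul' := fun x y => by ext; simp }
      map_one' := by
        ext m b
        have : ρ ((1 : G), (1 : H)) = 1 := map_one ρ
        simp [this]
      map_mul' := fun x y => by
        ext m b
        have : ρ (x * y, (1 : H)) = ρ (x, 1) * ρ (y, 1) := by rw [← map_mul]; simp
        simp [this] }
  have hθ : ∀ g (m : M) b, (θ g m).1 b = ρ (g, 1) (m.1 b) := fun g m b => rfl
  have key : ∀ M' : Submodule ℂ M, (∀ g, ∀ m ∈ M', θ g m ∈ M') → M' ≠ ⊥ →
      finrank ℂ V = finrank ℂ M' * finrank ℂ B := by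
    intro M' hM' hne
    have h1 := finrank_span_hom τ σ hirr (M'.map M.subtype) (by
      rintro _ ⟨m, _, rfl⟩
      exact m.2)
    have h2 : Submodule.span ℂ {v | ∃ m ∈ M'.map M.subtype, ∃ b, v = m b} = ⊤ := by
      have hinv : ∀ g, ∀ v ∈ Submodule.span ℂ {v | ∃ m ∈ M'.map M.subtype, ∃ b, v = m b},
          ρ g v ∈ Submodule.span ℂ {v | ∃ m ∈ M'.map M.subtype, ∃ b, v = m b} := by
        rintro ⟨g, h⟩ v hv
        induction hv using Submodule.span_induction with
        | mem x hx =>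
          obtain ⟨_, ⟨m, hm, rfl⟩, b, rfl⟩ := hx
          refine Submodule.subset_span ⟨_, ⟨θ g m, hM' g m hm, rfl⟩, σ h b, ?_⟩
          have e1 := (θ g m).2 h b
          refine Eq.trans ?_ e1.symm
          rw [hθ]
          change _ = ρ (1, h) _
          rw [← hcomm, ← Module.End.mul_apply, ← map_mul]
          simp
        | zero => simp
        | add x y _ _ hx hy => rw [map_add]; exact add_mem hx hy
        | smul c x _ hx => rw [map_smul]; exact Submodule.smul_mem _ _ hx
      rcases hρ.2 _ hinv with h | h
      · exfalso
        obtain ⟨m, hm, hm0⟩ := Submodule.exists_mem_ne_zero_of_ne_bot hne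
        apply hm0
        apply Subtype.ext
        ext b
        have : m.1 b ∈ Submodule.span ℂ {v | ∃ m ∈ M'.map M.subtype, ∃ b, v = m b} :=
          Submodule.subset_span ⟨m.1, ⟨m, hm, rfl⟩, b, rfl⟩
        rw [h] at this
        simpa using this
      · exact h
    rw [h2, finrank_top] at h1
    rw [h1, LinearEquiv.finrank_eq (Submodule.equivMapOfInjective M.subtype M.injective_subtype M')]
  have hM : Nontrivial M := by
    refine ⟨⟨⟨B.subtype, fun h b => rfl⟩, 0, fun h => hv ?_⟩⟩
    have := congrArg (fun m : M => m.1 ⟨v, hvB⟩) h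
    simpa using this
  have hd := key ⊤ (by simp) top_ne_bot
  rw [finrank_top] at hd
  refine ⟨finrank ℂ M, finrank ℂ B, ⟨M, inferInstance, inferInstance, inferInstance, θ,
    ⟨hM, fun W hW => ?_⟩, rfl⟩, ⟨B, inferInstance, inferInstance, inferInstance, σ, hirr, rfl⟩, hd⟩
  by_cases hb : W = ⊥
  · exact Or.inl hb
  · right
    have h3 := key W hW hb
    rw [hd] at h3
    have := hirr.1
    have hpos : 0 < finrank ℂ B := finrank_pos
    exact Submodule.eq_top_of_finrank_eq (Nat.eq_of_mul_eq_mul_right hpos h3).symm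

lemma HasDeg.congr {G H : Type} [Group G] [Group H] (e : G ≃* H) {d : ℕ} (h : HasDeg G d) :
    HasDeg H d := by
  obtain ⟨V, _, _, _, ρ, hρ, rfl⟩ := h
  refine ⟨V, inferInstance, inferInstance, inferInstance, ρ.comp e.symm.toMonoidHom,
    ⟨hρ.1, fun W hW => hρ.2 W fun g v hv => ?_⟩, rfl⟩
  simpa using hW (e g) v hv

lemma hasDeg_one (G : Type) [Group G] : HasDeg G 1 := by
  refine ⟨ℂ, inferInstance, inferInstance, inferInstance, 1, ⟨inferInstance, fun W _ => ?_⟩, by simp⟩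
  exact eq_bot_or_eq_top W

lemma hasDeg_subsingleton {G : Type} [Group G] [Subsingleton G] {d : ℕ} (h : HasDeg G d) : d = 1 := by
  obtain ⟨V, _, _, _, ρ, hρ, rfl⟩ := h
  have := hρ.1
  obtain ⟨v0, hv0⟩ := exists_ne (0 : V)
  rcases hρ.2 (Submodule.span ℂ {v0}) (by
    intro g v hv
    rw [Subsingleton.elim g 1]
    simpa using hv) with h | h
  · simp [hv0] at h
  · rw [← finrank_top ℂ V, ← h, finrank_span_singleton hv0]

/-- splitting off the first factor -/
def piFinSuccMulEquiv {n : ℕ} (G : Fin (n + 1) → Type) [∀ i, Group (G i)] :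
    (∀ i, G i) ≃* G 0 × (∀ i : Fin n, G i.succ) where
  toFun f := (f 0, fun i => f i.succ)
  invFun x := Fin.cons x.1 x.2
  left_inv f := by
    funext i
    refine Fin.cases ?_ (fun i => ?_) i <;> simp
  right_inv x := by simp
  map_mul' x y := rfl

lemma hasDeg_pi {n : ℕ} (G : Fin n → Type) [∀ i, Group (G i)] [∀ i, Finite (G i)] (d : ℕ) :
    HasDeg (∀ i, G i) d ↔ ∃ D : Fin n → ℕ, (∀ i, HasDeg (G i) (D i)) ∧ d = ∏ i, D i := by
  induction n generalizing d with
  | zero =>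
    constructor
    · intro h
      exact ⟨fun _ => 1, fun i => i.elim0, by simpa using hasDeg_subsingleton h⟩
    · rintro ⟨D, -, rfl⟩
      simpa using hasDeg_one _
  | succ n ih =>
    constructor
    · intro h
      obtain ⟨a, b, ha, hb, rfl⟩ := (h.congr (piFinSuccMulEquiv G)).of_prod
      obtain ⟨D, hD, rfl⟩ := (ih (fun i => G i.succ) b).1 hb
      refine ⟨Fin.cons a D, fun i => ?_, by simp [Fin.prod_univ_succ]⟩
      refine Fin.cases ?_ (fun i => ?_) i
      · simpa using ha
      · simpa using hD i
    · rintro ⟨D, hD, rfl⟩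
      rw [Fin.prod_univ_succ]
      refine ((hD 0).prod ?_).congr (piFinSuccMulEquiv G).symm
      exact (ih (fun i => G i.succ) _).2 ⟨_, fun i => hD i.succ, rfl⟩

open Module

set_option linter.unusedSimpArgs false
set_option linter.unusedSectionVars false
section SL2
variable {F : Type} [Field F]

/-- upper unipotent -/
def uu (x : F) : Matrix.SpecialLinearGroup (Fin 2) F := ⟨!![1, x; 0, 1], by simp [Matrix.det_fin_two]⟩
/-- diagonal -/
def tt (a : Fˣ) : Matrix.SpecialLinearGroup (Fin 2) F :=
  ⟨!![(a : F), 0; 0, (a : F)⁻¹], by simp [Matrix.det_fin_two]⟩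
/-- Weyl element -/
def ww : Matrix.SpecialLinearGroup (Fin 2) F := ⟨!![0, -1; 1, 0], by simp [Matrix.det_fin_two]⟩
/-- minus the identity -/
def mm : Matrix.SpecialLinearGroup (Fin 2) F := ⟨!![-1, 0; 0, -1], by simp [Matrix.det_fin_two]⟩

lemma sl2_ext {g h : Matrix.SpecialLinearGroup (Fin 2) F} (h00 : g.1 0 0 = h.1 0 0)
    (h01 : g.1 0 1 = h.1 0 1) (h10 : g.1 1 0 = h.1 1 0) (h11 : g.1 1 1 = h.1 1 1) : g = h := by
  apply Subtype.ext
  ext i j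
  fin_cases i <;> fin_cases j <;> assumption

lemma mul_e (g h : Matrix.SpecialLinearGroup (Fin 2) F) (i j : Fin 2) :
    (g * h).1 i j = g.1 i 0 * h.1 0 j + g.1 i 1 * h.1 1 j := by
  change (g.1 * h.1) i j = _
  simp [Matrix.mul_apply, Fin.sum_univ_two]
lemma one_e00 : (1 : Matrix.SpecialLinearGroup (Fin 2) F).1 0 0 = 1 := rfl
lemma one_e01 : (1 : Matrix.SpecialLinearGroup (Fin 2) F).1 0 1 = 0 := rfl
lemma one_e10 : (1 : Matrix.SpecialLinearGroup (Fin 2) F).1 1 0 = 0 := rfl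
lemma one_e11 : (1 : Matrix.SpecialLinearGroup (Fin 2) F).1 1 1 = 1 := rfl
lemma uu_e00 (x : F) : (uu x).1 0 0 = 1 := rfl
lemma uu_e01 (x : F) : (uu x).1 0 1 = x := rfl
lemma uu_e10 (x : F) : (uu x).1 1 0 = 0 := rfl
lemma uu_e11 (x : F) : (uu x).1 1 1 = 1 := rfl
lemma tt_e00 (a : Fˣ) : (tt a).1 0 0 = a := rfl
lemma tt_e01 (a : Fˣ) : (tt a).1 0 1 = 0 := rfl
lemma tt_e10 (a : Fˣ) : (tt a).1 1 0 = 0 := rfl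
lemma tt_e11 (a : Fˣ) : (tt a).1 1 1 = (a : F)⁻¹ := rfl
lemma ww_e00 : (ww : Matrix.SpecialLinearGroup (Fin 2) F).1 0 0 = 0 := rfl
lemma ww_e01 : (ww : Matrix.SpecialLinearGroup (Fin 2) F).1 0 1 = -1 := rfl
lemma ww_e10 : (ww : Matrix.SpecialLinearGroup (Fin 2) F).1 1 0 = 1 := rfl
lemma ww_e11 : (ww : Matrix.SpecialLinearGroup (Fin 2) F).1 1 1 = 0 := rfl
lemma mm_e00 : (mm : Matrix.SpecialLinearGroup (Fin 2) F).1 0 0 = -1 := rfl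
lemma mm_e01 : (mm : Matrix.SpecialLinearGroup (Fin 2) F).1 0 1 = 0 := rfl
lemma mm_e10 : (mm : Matrix.SpecialLinearGroup (Fin 2) F).1 1 0 = 0 := rfl
lemma mm_e11 : (mm : Matrix.SpecialLinearGroup (Fin 2) F).1 1 1 = -1 := rfl

lemma uu_zero : uu (0 : F) = 1 := by
  apply sl2_ext <;> simp only [mul_e, one_e00, one_e01, one_e10, one_e11, uu_e00, uu_e01, uu_e10, uu_e11, tt_e00, tt_e01,
    tt_e10, tt_e11, ww_e00, ww_e01, ww_e10, ww_e11, mm_e00, mm_e01, mm_e10, mm_e11]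
lemma uu_add (x y : F) : uu (x + y) = uu x * uu y := by
  apply sl2_ext <;> simp only [mul_e, one_e00, one_e01, one_e10, one_e11, uu_e00, uu_e01, uu_e10, uu_e11, tt_e00, tt_e01,
    tt_e10, tt_e11, ww_e00, ww_e01, ww_e10, ww_e11, mm_e00, mm_e01, mm_e10, mm_e11] <;> ring
lemma tt_one : tt (1 : Fˣ) = 1 := by apply sl2_ext <;> simp only [mul_e, one_e00, one_e01, one_e10, one_e11, uu_e00, uu_e01, uu_e10, uu_e11, tt_e00, tt_e01,
    tt_e10, tt_e11, ww_e00, ww_e01, ww_e10, ww_e11, mm_e00, mm_e01, mm_e10, mm_e11] <;> simp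
lemma tt_mul (a b : Fˣ) : tt (a * b) = tt a * tt b := by
  apply sl2_ext <;> simp only [mul_e, one_e00, one_e01, one_e10, one_e11, uu_e00, uu_e01, uu_e10, uu_e11, tt_e00, tt_e01,
    tt_e10, tt_e11, ww_e00, ww_e01, ww_e10, ww_e11, mm_e00, mm_e01, mm_e10, mm_e11] <;> simp [mul_comm]
lemma tt_uu (a : Fˣ) (x : F) : tt a * uu x = uu ((a : F) ^ 2 * x) * tt a := by
  have : (a : F) ≠ 0 := a.ne_zero
  apply sl2_ext <;> simp only [mul_e, one_e00, one_e01, one_e10, one_e11, uu_e00, uu_e01, uu_e10, uu_e11, tt_e00, tt_e01,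
    tt_e10, tt_e11, ww_e00, ww_e01, ww_e10, ww_e11, mm_e00, mm_e01, mm_e10, mm_e11] <;> field_simp <;> ring
lemma ww_tt (a : Fˣ) : ww * tt a = tt a⁻¹ * ww := by
  apply sl2_ext <;> simp only [mul_e, one_e00, one_e01, one_e10, one_e11, uu_e00, uu_e01, uu_e10, uu_e11, tt_e00, tt_e01,
    tt_e10, tt_e11, ww_e00, ww_e01, ww_e10, ww_e11, mm_e00, mm_e01, mm_e10, mm_e11] <;> simp
lemma ww_ww : ww * ww = (mm : Matrix.SpecialLinearGroup (Fin 2) F) := by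
  apply sl2_ext <;> simp only [mul_e, one_e00, one_e01, one_e10, one_e11, uu_e00, uu_e01, uu_e10, uu_e11, tt_e00, tt_e01,
    tt_e10, tt_e11, ww_e00, ww_e01, ww_e10, ww_e11, mm_e00, mm_e01, mm_e10, mm_e11] <;> simp
lemma ww_uu_ww (x : Fˣ) :
    ww * uu (x : F) * ww = uu (-(x : F)⁻¹) * (ww * tt x) * uu (-(x : F)⁻¹) := by
  have : (x : F) ≠ 0 := x.ne_zero
  apply sl2_ext <;> simp only [mul_e, one_e00, one_e01, one_e10, one_e11, uu_e00, uu_e01, uu_e10, uu_e11, tt_e00, tt_e01,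
    tt_e10, tt_e11, ww_e00, ww_e01, ww_e10, ww_e11, mm_e00, mm_e01, mm_e10, mm_e11] <;> field_simp <;> ring
lemma sl2_det (g : Matrix.SpecialLinearGroup (Fin 2) F) :
    g.1 0 0 * g.1 1 1 - g.1 0 1 * g.1 1 0 = 1 := by
  have := g.2
  rwa [Matrix.det_fin_two] at this
lemma bruhat0 (g : Matrix.SpecialLinearGroup (Fin 2) F) (h : g.1 1 0 = 0) :
    ∃ (a : Fˣ) (y : F), g = tt a * uu y := by
  have hd := sl2_det g
  rw [h, mul_zero, sub_zero] at hd
  have ha : g.1 0 0 ≠ 0 := left_ne_zero_of_mul_eq_one hd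
  refine ⟨Units.mk0 (g.1 0 0) ha, g.1 0 1 / g.1 0 0, ?_⟩
  apply sl2_ext <;> simp only [mul_e, one_e00, one_e01, one_e10, one_e11, uu_e00, uu_e01, uu_e10, uu_e11, tt_e00, tt_e01,
    tt_e10, tt_e11, ww_e00, ww_e01, ww_e10, ww_e11, mm_e00, mm_e01, mm_e10, mm_e11, h, Units.val_mk0]
  · ring
  · field_simp; ring
  · ring
  · rw [eq_inv_of_mul_eq_one_right hd]; ring
lemma bruhat1 (g : Matrix.SpecialLinearGroup (Fin 2) F) (c : Fˣ) (h : g.1 1 0 = c) :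
    g = uu (g.1 0 0 / c) * (ww * tt c) * uu (g.1 1 1 / c) := by
  have hd := sl2_det g
  rw [h] at hd
  have hc : (c : F) ≠ 0 := c.ne_zero
  apply sl2_ext <;> simp only [mul_e, one_e00, one_e01, one_e10, one_e11, uu_e00, uu_e01, uu_e10, uu_e11, tt_e00, tt_e01,
    tt_e10, tt_e11, ww_e00, ww_e01, ww_e10, ww_e11, mm_e00, mm_e01, mm_e10, mm_e11, h]
  · field_simp; ring
  · field_simp
    linear_combination (-(c : F)) * hd
  · ring
  · field_simp; ring

lemma sum_split [Fintype F] {M : Type} [AddCommMonoid M] (f : F → M) :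
    letI := Classical.decEq F
    ∑ x, f x = f 0 + ∑ x : Fˣ, f x := by
  classical
  rw [Fintype.sum_eq_add_sum_subtype_ne f 0]
  congr 1
  exact (Fintype.sum_equiv unitsEquivNeZero _ _ (fun x => rfl)).symm

variable [Fintype F] {V : Type} [AddCommGroup V] [Module ℂ V]
  (ψ : AddChar F ℂ) (ρ : Representation ℂ (Matrix.SpecialLinearGroup (Fin 2) F) V)

/-- projector onto the `ψ(c·)`-isotypic part for the unipotent subgroup -/
noncomputable def EE (c : F) : V →ₗ[ℂ] V :=
  (Fintype.card F : ℂ)⁻¹ • ∑ x : F, ψ (-(c * x)) • ρ (uu x)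

lemma card_ne : (Fintype.card F : ℂ) ≠ 0 := by simp

lemma EE_apply (c : F) (v : V) :
    EE ψ ρ c v = (Fintype.card F : ℂ)⁻¹ • ∑ x : F, ψ (-(c * x)) • ρ (uu x) v := by
  simp [EE]

lemma psi_neg_mul (x : F) : ψ (-x) * ψ x = 1 := by
  rw [← AddChar.map_add_eq_mul]; simp

lemma uu_EE (c y : F) (v : V) : ρ (uu y) (EE ψ ρ c v) = ψ (c * y) • EE ψ ρ c v := by
  rw [EE_apply, map_smul, smul_comm (ψ (c * y)), map_sum, Finset.smul_sum (r := ψ (c * y))]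
  congr 1
  refine Fintype.sum_equiv (Equiv.addLeft y) _ _ fun x => ?_
  simp only [Equiv.coe_addLeft, map_smul, uu_add, map_mul, Module.End.mul_apply]
  rw [smul_smul, ← AddChar.map_add_eq_mul]
  congr 2
  ring

lemma EE_uu (c y : F) (v : V) : EE ψ ρ c (ρ (uu y) v) = ψ (c * y) • EE ψ ρ c v := by
  rw [EE_apply, EE_apply, smul_comm (ψ (c * y)), Finset.smul_sum (r := ψ (c * y))]
  congr 1
  refine Fintype.sum_equiv (Equiv.addRight y) _ _ fun x => ?_
  simp only [Equiv.coe_addRight, uu_add, map_mul, Module.End.mul_apply]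
  rw [smul_smul, ← AddChar.map_add_eq_mul]
  congr 2
  ring

lemma EE_of_eigen (hψ : ψ.IsPrimitive) (c d : F) (v : V) (hv : ∀ y, ρ (uu y) v = ψ (d * y) • v) :
    EE ψ ρ c v = letI := Classical.decEq F; if c = d then v else 0 := by
  classical
  rw [EE_apply]
  simp only [hv, smul_smul, ← Finset.sum_smul, ← AddChar.map_add_eq_mul]
  have : ∀ x, -(c * x) + d * x = x * (d - c) := fun x => by ring
  simp only [this]
  rw [AddChar.sum_mulShift _ hψ, sub_eq_zero]
  split_ifs with h1 h2 h2
  · simp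
  · exact absurd h1.symm h2
  · exact absurd h2.symm h1
  · simp

lemma EE_EE_self (hψ : ψ.IsPrimitive) (c : F) (v : V) : EE ψ ρ c (EE ψ ρ c v) = EE ψ ρ c v := by
  simp [EE_of_eigen ψ ρ hψ c c _ (fun y => uu_EE ψ ρ c y v)]

lemma EE_EE_ne (hψ : ψ.IsPrimitive) {c d : F} (h : c ≠ d) (v : V) :
    EE ψ ρ c (EE ψ ρ d v) = 0 := by
  simp [EE_of_eigen ψ ρ hψ c d _ (fun y => uu_EE ψ ρ d y v), h]

lemma sum_EE (hψ : ψ.IsPrimitive) (v : V) : ∑ c, EE ψ ρ c v = v := by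
  classical
  simp only [EE_apply]
  rw [← Finset.smul_sum, Finset.sum_comm]
  simp only [← Finset.sum_smul]
  have : ∀ x, (∑ c, ψ (-(c * x))) = if x = 0 then (Fintype.card F : ℂ) else 0 := by
    intro x
    have := AddChar.sum_mulShift (-x) hψ
    simpa [mul_neg, neg_eq_zero] using this
  simp only [this]
  simp [uu_zero]

lemma tt_EE (a : Fˣ) (c : F) (v : V) :
    ρ (tt a) (EE ψ ρ c v) = EE ψ ρ (c * (a⁻¹ : Fˣ) ^ 2) (ρ (tt a) v) := by
  rw [EE_apply, EE_apply, map_smul, map_sum]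
  congr 1
  refine Fintype.sum_equiv (Equiv.mulLeft₀ ((a : F) ^ 2) (pow_ne_zero _ a.ne_zero)) _ _ fun x => ?_
  simp only [Equiv.mulLeft₀_apply, map_smul, ← Module.End.mul_apply, ← map_mul, tt_uu]
  congr 2
  have : (a : F) ≠ 0 := a.ne_zero
  simp
  field_simp

lemma ww_ww_apply (hm : ρ mm = 1) (v : V) : ρ ww (ρ ww v) = v := by
  rw [← Module.End.mul_apply, ← map_mul, ww_ww, hm]; rfl

lemma ww_tt_apply (a : Fˣ) (v : V) : ρ ww (ρ (tt a) v) = ρ (tt a⁻¹) (ρ ww v) := by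
  rw [← Module.End.mul_apply, ← map_mul, ww_tt, map_mul]; rfl

lemma tt_mul_apply (a b : Fˣ) (v : V) : ρ (tt (a * b)) v = ρ (tt a) (ρ (tt b) v) := by
  rw [tt_mul, map_mul]; rfl

/-- the basic Bruhat relation -/
lemma bruhat_rel (hm : ρ mm = 1) (c d : F) (v : V) (hv : ∀ y, ρ (uu y) v = v) :
    letI := Classical.decEq F
    EE ψ ρ d (ρ ww (EE ψ ρ c (ρ ww v))) = (Fintype.card F : ℂ)⁻¹ • (EE ψ ρ d v +
      ∑ x : Fˣ, ψ (-(c * x) - d * (x : F)⁻¹) • EE ψ ρ d (ρ ww (ρ (tt x) v))) := by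
  classical
  rw [EE_apply ψ ρ c, map_smul, map_smul, map_sum, map_sum, sum_split]
  congr 2
  · simp [uu_zero, ww_ww_apply ρ hm]
  · refine Fintype.sum_congr _ _ fun x => ?_
    rw [map_smul, map_smul]
    have : ρ ww (ρ (uu (x : F)) (ρ ww v)) = ρ (uu (-(x : F)⁻¹)) (ρ ww (ρ (tt x) v)) := by
      have h1 : ρ (ww * uu (x : F) * ww) v = ρ (uu (-(x : F)⁻¹) * (ww * tt x) * uu (-(x : F)⁻¹)) v := by
        rw [ww_uu_ww]
      simpa only [map_mul, Module.End.mul_apply, hv] using h1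
    rw [this, EE_uu, smul_smul, ← AddChar.map_add_eq_mul]
    congr 2
    ring

end SL2

open Module
set_option linter.unusedSimpArgs false
set_option linter.unusedSectionVars false
section SL2b
variable {F : Type} [Field F] [Fintype F] {V : Type} [AddCommGroup V] [Module ℂ V]
  (ψ : AddChar F ℂ) (ρ : Representation ℂ (Matrix.SpecialLinearGroup (Fin 2) F) V)

lemma exists_prim (F : Type) [Field F] [Fintype F] : ∃ ψ : AddChar F ℂ, ψ.IsPrimitive := by
  obtain ⟨ψ, h⟩ := (AddChar.exists_apply_ne_zero (a := (1 : F))).2 one_ne_zero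
  refine ⟨ψ, AddChar.IsPrimitive.of_ne_one ?_⟩
  rintro rfl
  simp at h

/-- dimension of the isotypic part -/
noncomputable def dd (c : F) : ℕ := finrank ℂ (LinearMap.range (EE ψ ρ c))

lemma finrank_eq_sum_dd [FiniteDimensional ℂ V] (hψ : ψ.IsPrimitive) :
    finrank ℂ V = ∑ c, dd ψ ρ c := by
  have h1 : ∑ c, EE ψ ρ c = LinearMap.id := by
    ext v; simp [sum_EE ψ ρ hψ]
  have h2 := congrArg (LinearMap.trace ℂ V) h1
  rw [map_sum, LinearMap.trace_id] at h2
  have h3 : ∀ c, LinearMap.trace ℂ V (EE ψ ρ c) = (dd ψ ρ c : ℂ) := by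
    intro c
    apply LinearMap.IsProj.trace
    refine ⟨fun x => LinearMap.mem_range_self _ x, ?_⟩
    rintro _ ⟨y, rfl⟩
    exact EE_EE_self ψ ρ hψ c y
  simp only [h3] at h2
  exact_mod_cast h2.symm

lemma tt_inv_apply (a : Fˣ) (v : V) : ρ (tt a) (ρ (tt a⁻¹) v) = v := by
  rw [← tt_mul_apply]; simp [tt_one]

lemma dd_sq_le [FiniteDimensional ℂ V] (a : Fˣ) (c : F) :
    dd ψ ρ (c * (a⁻¹ : Fˣ) ^ 2) ≤ dd ψ ρ c := by
  have : LinearMap.range (EE ψ ρ (c * (a⁻¹ : Fˣ) ^ 2)) ≤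
      (LinearMap.range (EE ψ ρ c)).map (ρ (tt a)) := by
    rintro _ ⟨v, rfl⟩
    refine ⟨EE ψ ρ c (ρ (tt a⁻¹) v), LinearMap.mem_range_self _ _, ?_⟩
    rw [tt_EE, tt_inv_apply]
  exact (Submodule.finrank_mono this).trans (Submodule.finrank_map_le _ _)

lemma dd_sq [FiniteDimensional ℂ V] (a : Fˣ) (c : F) :
    dd ψ ρ (c * (a : F) ^ 2) = dd ψ ρ c := by
  apply le_antisymm
  · simpa using dd_sq_le ψ ρ a⁻¹ c
  · have := dd_sq_le ψ ρ a (c * (a : F) ^ 2)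
    have ha : (a : F) ≠ 0 := a.ne_zero
    have h : c * (a : F) ^ 2 * ((a⁻¹ : Fˣ) : F) ^ 2 = c := by
      simp
    rwa [h] at this

lemma sum_sq_classes (hF : ringChar F ≠ 2) (h : F → ℕ) (hh : ∀ (a : Fˣ) c, h (c * (a : F) ^ 2) = h c)
    (c₁ c₀ : F) (hc₁ : c₁ ≠ 0) (hc₀ : c₀ ≠ 0) (hns : ¬ IsSquare (c₁ * c₀)) :
    2 * ∑ c, h c + (h c₁ + h c₀) = 2 * h 0 + Fintype.card F * (h c₁ + h c₀) := by
  classical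
  have key : ∀ c d : F, c ≠ 0 → d ≠ 0 → IsSquare (c * d) → h c = h d := by
    rintro c d hc hd ⟨b, hb⟩
    have hb0 : b ≠ 0 := by rintro rfl; simp [hc, hd] at hb
    have := hh (Units.mk0 (b / d) (div_ne_zero hb0 hd)) d
    rw [← this]
    congr 1
    simp
    field_simp
    linear_combination hb
  have main : ∀ c : F, (2 * h c : ℤ) = (h c₁ + h c₀) +
      quadraticChar F (c * c₁) * (h c₁ - h c₀) + if c = 0 then (2 * h 0 - (h c₁ + h c₀) : ℤ) else 0 := by
    intro c
    by_cases hc : c = 0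
    · subst hc; simp
    · have hn : quadraticChar F (c₁ * c₀) = -1 := quadraticChar_neg_one_iff_not_isSquare.2 hns
      rcases quadraticChar_dichotomy (mul_ne_zero hc hc₁) with h1 | h1
      · rw [h1, key c c₁ hc hc₁ ((quadraticChar_one_iff_isSquare (mul_ne_zero hc hc₁)).1 h1)]
        simp [hc]; ring
      · have : quadraticChar F (c * c₀) = 1 := by
          have h2 : quadraticChar F (c * c₁) * quadraticChar F (c₁ * c₀) = quadraticChar F (c * c₀) := by
            rw [← map_mul, show c * c₁ * (c₁ * c₀) = c * c₀ * c₁ ^ 2 by ring, map_mul,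
              quadraticChar_sq_one' hc₁, mul_one]
          rw [← h2, h1, hn]; norm_num
        rw [h1, key c c₀ hc hc₀ ((quadraticChar_one_iff_isSquare (mul_ne_zero hc hc₀)).1 this)]
        simp [hc]; ring
  have hs : ∑ c : F, quadraticChar F (c * c₁) = 0 := by
    rw [← quadraticChar_sum_zero hF]
    exact Fintype.sum_equiv (Equiv.mulRight₀ c₁ hc₁) _ _ fun x => rfl
  have tot := Finset.sum_congr (rfl : (Finset.univ : Finset F) = Finset.univ) (fun c _ => main c)
  rw [Finset.sum_add_distrib, Finset.sum_add_distrib, ← Finset.mul_sum, ← Finset.sum_mul, hs] at tot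
  simp at tot
  zify
  linear_combination tot

/-- anti-automorphism -/
def sg (g : Matrix.SpecialLinearGroup (Fin 2) F) : Matrix.SpecialLinearGroup (Fin 2) F :=
  ⟨!![g.1 1 1, g.1 0 1; g.1 1 0, g.1 0 0], by
    rw [Matrix.det_fin_two]; simp; linear_combination sl2_det g⟩

lemma sg_e00 (g : Matrix.SpecialLinearGroup (Fin 2) F) : (sg g).1 0 0 = g.1 1 1 := rfl
lemma sg_e01 (g : Matrix.SpecialLinearGroup (Fin 2) F) : (sg g).1 0 1 = g.1 0 1 := rfl
lemma sg_e10 (g : Matrix.SpecialLinearGroup (Fin 2) F) : (sg g).1 1 0 = g.1 1 0 := rfl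
lemma sg_e11 (g : Matrix.SpecialLinearGroup (Fin 2) F) : (sg g).1 1 1 = g.1 0 0 := rfl

lemma sg_mul (g h : Matrix.SpecialLinearGroup (Fin 2) F) : sg (g * h) = sg h * sg g := by
  apply sl2_ext <;> simp only [mul_e, sg_e00, sg_e01, sg_e10, sg_e11] <;> ring
lemma sg_uu (x : F) : sg (uu x) = uu x := by
  apply sl2_ext <;> simp only [uu_e00, uu_e01, uu_e10, uu_e11, sg_e00, sg_e01, sg_e10, sg_e11]

lemma phi_zero (hψ : ψ.IsPrimitive) {c : F} (hc : c ≠ 0) (g : Matrix.SpecialLinearGroup (Fin 2) F)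
    (h0 : g.1 1 0 = 0) (h1 : (g.1 0 0) ^ 2 ≠ 1) (v : V) : EE ψ ρ c (ρ g (EE ψ ρ c v)) = 0 := by
  obtain ⟨a, y, rfl⟩ := bruhat0 g h0
  simp only [mul_e, tt_e00, tt_e01, uu_e00, uu_e10] at h1
  rw [map_mul, Module.End.mul_apply, uu_EE, map_smul, map_smul, tt_EE, EE_EE_ne ψ ρ hψ, smul_zero]
  intro h
  apply h1
  have : (a : F) ≠ 0 := a.ne_zero
  simp at h
  field_simp at h
  rw [mul_one, mul_zero, add_zero, h]

lemma phi_sg (hψ : ψ.IsPrimitive) {c : F} (hc : c ≠ 0) (g : Matrix.SpecialLinearGroup (Fin 2) F)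
    (v : V) : EE ψ ρ c (ρ (sg g) (EE ψ ρ c v)) = EE ψ ρ c (ρ g (EE ψ ρ c v)) := by
  by_cases h0 : g.1 1 0 = 0
  · have hd := sl2_det g
    rw [h0, mul_zero, sub_zero] at hd
    by_cases h1 : (g.1 0 0) ^ 2 = 1
    · have : g.1 1 1 = g.1 0 0 := by
        have : g.1 0 0 ≠ 0 := left_ne_zero_of_mul_eq_one hd
        apply mul_left_cancel₀ this
        rw [hd, ← sq, h1]
      have : sg g = g := by
        apply sl2_ext <;> simp [sg_e00, sg_e01, sg_e10, sg_e11, this]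
      rw [this]
    · rw [phi_zero ψ ρ hψ hc g h0 h1, phi_zero ψ ρ hψ hc (sg g) h0]
      rw [sg_e00]
      intro h
      apply h1
      have : (g.1 0 0 * g.1 1 1) ^ 2 = 1 := by rw [hd, one_pow]
      rwa [mul_pow, h, mul_one] at this
  · have e1 := bruhat1 g (Units.mk0 _ h0) rfl
    have e2 := bruhat1 (sg g) (Units.mk0 _ h0) rfl
    rw [sg_e00, sg_e11] at e2
    rw [e2]
    conv_rhs => rw [e1]
    simp only [map_mul, Module.End.mul_apply, uu_EE, EE_uu, map_smul, smul_smul]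
    congr 1
    ring

lemma phi_phi (hψ : ψ.IsPrimitive) (c : F) (g h : Matrix.SpecialLinearGroup (Fin 2) F)
    (v : V) : EE ψ ρ c (ρ g (EE ψ ρ c (ρ h (EE ψ ρ c v)))) =
      (Fintype.card F : ℂ)⁻¹ • ∑ x, ψ (-(c * x)) • EE ψ ρ c (ρ (g * uu x * h) (EE ψ ρ c v)) := by
  conv_lhs => rw [EE_apply ψ ρ c (ρ h _)]
  simp only [map_smul, map_sum, map_mul, Module.End.mul_apply]

lemma phi_comm (hψ : ψ.IsPrimitive) {c : F} (hc : c ≠ 0) (g h : Matrix.SpecialLinearGroup (Fin 2) F)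
    (v : V) : EE ψ ρ c (ρ g (EE ψ ρ c (ρ h (EE ψ ρ c v)))) =
      EE ψ ρ c (ρ h (EE ψ ρ c (ρ g (EE ψ ρ c v)))) := by
  have e : ∀ x, EE ψ ρ c (ρ (g * uu x * h) (EE ψ ρ c v)) =
      EE ψ ρ c (ρ (sg h * uu x * sg g) (EE ψ ρ c v)) := by
    intro x
    rw [← phi_sg ψ ρ hψ hc (g * uu x * h), sg_mul, sg_mul, sg_uu, mul_assoc]
  rw [phi_phi ψ ρ hψ]
  simp only [e]
  rw [← phi_phi ψ ρ hψ, phi_sg ψ ρ hψ hc g, phi_sg ψ ρ hψ hc h]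

lemma phi_comm_all [FiniteDimensional ℂ V] (hψ : ψ.IsPrimitive) (hirr : IrrRep ρ)
    {c : F} (hc : c ≠ 0) (A B : V →ₗ[ℂ] V) (v : V) :
    EE ψ ρ c (A (EE ψ ρ c (B (EE ψ ρ c v)))) = EE ψ ρ c (B (EE ψ ρ c (A (EE ψ ρ c v)))) := by
  have hA : A ∈ Submodule.span ℂ (Set.range fun g => (ρ g : V →ₗ[ℂ] V)) := by
    rw [hirr.burnside]; trivial
  have hB : B ∈ Submodule.span ℂ (Set.range fun g => (ρ g : V →ₗ[ℂ] V)) := by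
    rw [hirr.burnside]; trivial
  induction hA using Submodule.span_induction with
  | zero => simp
  | add x y _ _ hx hy => simp [hx, hy]
  | smul a x _ hx => simp [hx]
  | mem x hx =>
    obtain ⟨g, rfl⟩ := hx
    induction hB using Submodule.span_induction with
    | zero => simp
    | add x y _ _ hx hy => simp [hx, hy]
    | smul a x _ hx => simp [hx]
    | mem x hx =>
      obtain ⟨h, rfl⟩ := hx
      exact phi_comm ψ ρ hψ hc g h v

lemma dd_le_one [FiniteDimensional ℂ V] (hψ : ψ.IsPrimitive) (hirr : IrrRep ρ)
    {c : F} (hc : c ≠ 0) : dd ψ ρ c ≤ 1 := by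
  by_cases hb : ∀ x ∈ LinearMap.range (EE ψ ρ c), x = 0
  · have : LinearMap.range (EE ψ ρ c) = ⊥ := (Submodule.eq_bot_iff _).2 hb
    rw [dd, this]; simp
  push Not at hb
  obtain ⟨x, hx, hx0⟩ := hb
  apply finrank_le_one (⟨x, hx⟩ : LinearMap.range (EE ψ ρ c))
  rintro ⟨y, hy⟩
  by_contra hne
  have hyx : y ∉ Submodule.span ℂ {x} := by
    rw [Submodule.mem_span_singleton]
    rintro ⟨a, ha⟩
    exact hne ⟨a, Subtype.ext ha⟩
  have hx0' : x ∉ (⊥ : Submodule ℂ V) := by simpa using hx0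
  obtain ⟨φ, hφ, hφ'⟩ := Submodule.exists_le_ker_of_notMem hyx
  obtain ⟨φ₁, hφ₁, -⟩ := Submodule.exists_le_ker_of_notMem hx0'
  have hφx : φ x = 0 := hφ' (Submodule.mem_span_singleton_self x)
  have ex : EE ψ ρ c x = x := by obtain ⟨z, rfl⟩ := hx; exact EE_EE_self ψ ρ hψ c z
  have ey : EE ψ ρ c y = y := by obtain ⟨z, rfl⟩ := hy; exact EE_EE_self ψ ρ hψ c z
  have := phi_comm_all ψ ρ hψ hirr hc (φ.smulRight x) (φ₁.smulRight y) x
  simp [ex, ey, hφx, hφ, hφ₁, hx0] at this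

end SL2b

open Module
set_option linter.unusedSimpArgs false
set_option linter.unusedSectionVars false
section SL2c
variable {F : Type} [Field F] [Fintype F] {V : Type} [AddCommGroup V] [Module ℂ V]
  (ψ : AddChar F ℂ) (ρ : Representation ℂ (Matrix.SpecialLinearGroup (Fin 2) F) V)

lemma dd_pos [FiniteDimensional ℂ V] {c : F} {v : V} (h : EE ψ ρ c v ≠ 0) : 1 ≤ dd ψ ρ c := by
  rw [dd, Nat.one_le_iff_ne_zero]
  intro h0
  rw [Submodule.finrank_eq_zero] at h0
  have : EE ψ ρ c v ∈ LinearMap.range (EE ψ ρ c) := LinearMap.mem_range_self _ _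
  rw [h0] at this
  exact h (by simpa using this)

lemma dd_zero {c : F} (h : ∀ v, EE ψ ρ c v = 0) : dd ψ ρ c = 0 := by
  have : EE ψ ρ c = 0 := LinearMap.ext h
  rw [dd, this, LinearMap.range_zero, finrank_bot]

lemma EE_zero_of_fixed (hψ : ψ.IsPrimitive) {v : V} (hv : ∀ y, ρ (uu y) v = v) : EE ψ ρ 0 v = v := by
  have := EE_of_eigen ψ ρ hψ 0 0 v (by simpa using hv)
  simpa using this

lemma EE_ne_of_fixed (hψ : ψ.IsPrimitive) {c : F} (hc : c ≠ 0) {v : V} (hv : ∀ y, ρ (uu y) v = v) :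
    EE ψ ρ c v = 0 := by
  have := EE_of_eigen ψ ρ hψ c 0 v (by simpa using hv)
  simpa [hc] using this

lemma uu_EE_zero (y : F) (v : V) : ρ (uu y) (EE ψ ρ 0 v) = EE ψ ρ 0 v := by
  rw [uu_EE]; simp

lemma tt_EE_zero (a : Fˣ) (v : V) : ρ (tt a) (EE ψ ρ 0 v) = EE ψ ρ 0 (ρ (tt a) v) := by
  rw [tt_EE, zero_mul]

lemma exists_borel_eigen [FiniteDimensional ℂ V] (hψ : ψ.IsPrimitive) (h : ∃ v, EE ψ ρ 0 v ≠ 0) :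
    ∃ v : V, v ≠ 0 ∧ (∀ y, ρ (uu y) v = v) ∧ ∃ χ : Fˣ → ℂ, ∀ a, ρ (tt a) v = χ a • v := by
  obtain ⟨v₀, hv₀⟩ := h
  obtain ⟨g, hg⟩ := IsCyclic.exists_monoid_generator (α := Fˣ)
  have hinv : ∀ x ∈ LinearMap.range (EE ψ ρ 0), ρ (tt g) x ∈ LinearMap.range (EE ψ ρ 0) := by
    rintro _ ⟨x, rfl⟩
    exact ⟨ρ (tt g) x, (tt_EE_zero ψ ρ g x).symm⟩
  let T := (ρ (tt g)).restrict hinv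
  haveI : Nontrivial (LinearMap.range (EE ψ ρ 0)) :=
    ⟨⟨⟨_, LinearMap.mem_range_self _ v₀⟩, 0, fun h => hv₀ (congrArg Subtype.val h)⟩⟩
  obtain ⟨μ, hμ⟩ := Module.End.exists_eigenvalue T
  obtain ⟨⟨x, hx⟩, hxμ⟩ := hμ.exists_hasEigenvector
  have h1 : ρ (tt g) x = μ • x := congrArg Subtype.val hxμ.apply_eq_smul
  have hx0 : x ≠ 0 := fun h => hxμ.2 (Subtype.ext h)
  have h2 : ∀ k : ℕ, ρ (tt (g ^ k)) x = μ ^ k • x := by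
    intro k
    induction k with
    | zero => simp [tt_one]
    | succ k ih => rw [pow_succ, tt_mul_apply, h1, map_smul, ih, smul_smul, pow_succ, mul_comm]
  refine ⟨x, hx0, ?_, ?_⟩
  · intro y
    obtain ⟨z, rfl⟩ := hx
    exact uu_EE_zero ψ ρ y z
  · choose k hk using fun a => (Submonoid.mem_powers_iff _ _).1 (hg a)
    refine ⟨fun a => μ ^ k a, fun a => ?_⟩
    rw [← h2, hk]

lemma EE_span [FiniteDimensional ℂ V] (hirr : IrrRep ρ) {v : V} (hv0 : v ≠ 0)
    (hv : ∀ y, ρ (uu y) v = v) {χ : Fˣ → ℂ} (hχ : ∀ a, ρ (tt a) v = χ a • v) (c : F) (z : V) :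
    ∃ a b : ℂ, EE ψ ρ c z = a • EE ψ ρ c v + b • EE ψ ρ c (ρ ww v) := by
  have hz : z ∈ Submodule.span ℂ (Set.range fun g => ρ g v) := by
    rw [hirr.span_orbit hv0]; trivial
  induction hz using Submodule.span_induction with
  | zero => exact ⟨0, 0, by simp⟩
  | add x y _ _ hx hy =>
    obtain ⟨a, b, h1⟩ := hx
    obtain ⟨a', b', h2⟩ := hy
    refine ⟨a + a', b + b', ?_⟩
    rw [map_add, h1, h2]; module
  | smul t x _ hx =>
    obtain ⟨a, b, h1⟩ := hx
    refine ⟨t * a, t * b, ?_⟩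
    rw [map_smul, h1]; module
  | mem x hx =>
    obtain ⟨g, rfl⟩ := hx
    by_cases h0 : g.1 1 0 = 0
    · obtain ⟨a, y, rfl⟩ := bruhat0 g h0
      refine ⟨χ a, 0, ?_⟩
      simp only [map_mul, Module.End.mul_apply, hv, hχ, map_smul]
      simp
    · rw [bruhat1 g (Units.mk0 _ h0) rfl]
      refine ⟨0, ?_, ?_⟩
      rotate_left
      · simp only [map_mul, Module.End.mul_apply, hv, hχ, map_smul, EE_uu, smul_smul]
        rw [zero_smul, zero_add]

lemma EE0_ww_eq (hψ : ψ.IsPrimitive) (hm : ρ mm = 1) {v : V}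
    (hv : ∀ y, ρ (uu y) v = v) {χ : Fˣ → ℂ} (hχ : ∀ a, ρ (tt a) v = χ a • v) (c : F) :
    letI := Classical.decEq F
    EE ψ ρ 0 (ρ ww (EE ψ ρ c (ρ ww v))) = (Fintype.card F : ℂ)⁻¹ • (v +
      (∑ x : Fˣ, ψ (-(c * x)) * χ x) • EE ψ ρ 0 (ρ ww v)) := by
  rw [bruhat_rel ψ ρ hm c 0 v hv, EE_zero_of_fixed ψ ρ hψ hv, Finset.sum_smul]
  simp only [hχ, map_smul, smul_smul, zero_mul, sub_zero]

lemma J_ne_zero (hψ : ψ.IsPrimitive) (hm : ρ mm = 1) {v : V} (hv0 : v ≠ 0)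
    (hv : ∀ y, ρ (uu y) v = v) {χ : Fˣ → ℂ} (hχ : ∀ a, ρ (tt a) v = χ a • v) :
    EE ψ ρ 0 (ρ ww v) ≠ 0 := by
  intro h
  have := EE0_ww_eq ψ ρ hψ hm hv hχ 0
  rw [h] at this
  simp only [map_zero, smul_zero, add_zero] at this
  exact hv0 ((smul_eq_zero.1 this.symm).resolve_left (by simp))

lemma dim_case_A [FiniteDimensional ℂ V] (hψ : ψ.IsPrimitive) (hirr : IrrRep ρ) (hm : ρ mm = 1)
    {v : V} (hv0 : v ≠ 0)
    (hv : ∀ y, ρ (uu y) v = v) {χ : Fˣ → ℂ} (hχ : ∀ a, ρ (tt a) v = χ a • v)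
    (hJ : ∀ l : ℂ, EE ψ ρ 0 (ρ ww v) ≠ l • v) : finrank ℂ V = Fintype.card F + 1 := by
  classical
  have h0 : dd ψ ρ 0 = 2 := by
    have hli : LinearIndependent ℂ ![v, EE ψ ρ 0 (ρ ww v)] := by
      rw [LinearIndependent.pair_iff' hv0]
      intro a h
      exact hJ a h.symm
    have hr : LinearMap.range (EE ψ ρ 0) = Submodule.span ℂ (Set.range ![v, EE ψ ρ 0 (ρ ww v)]) := by
      apply le_antisymm
      · rintro _ ⟨z, rfl⟩
        obtain ⟨a, b, h⟩ := EE_span ψ ρ hirr hv0 hv hχ 0 z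
        rw [h, EE_zero_of_fixed ψ ρ hψ hv]
        exact Submodule.add_mem _
          (Submodule.smul_mem _ _ (Submodule.subset_span ⟨0, rfl⟩))
          (Submodule.smul_mem _ _ (Submodule.subset_span ⟨1, rfl⟩))
      · rw [Submodule.span_le]
        rintro _ ⟨i, rfl⟩
        fin_cases i
        · exact ⟨v, EE_zero_of_fixed ψ ρ hψ hv⟩
        · exact LinearMap.mem_range_self _ _
    rw [dd, hr, finrank_span_eq_card hli]; rfl
  have h1 : ∀ c : Fˣ, dd ψ ρ c = 1 := by
    intro c
    apply le_antisymm (dd_le_one ψ ρ hψ hirr c.ne_zero)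
    apply dd_pos ψ ρ (v := ρ ww v)
    intro h
    have := EE0_ww_eq ψ ρ hψ hm hv hχ c
    rw [h, map_zero, map_zero] at this
    have h3 := (smul_eq_zero.1 this.symm).resolve_left (by simp)
    by_cases hk : (∑ x : Fˣ, ψ (-(c * x)) * χ x) = 0
    · rw [hk] at h3
      simp [hv0] at h3
    · apply hJ (-(∑ x : Fˣ, ψ (-(c * x)) * χ x)⁻¹)
      rw [neg_smul, eq_neg_iff_add_eq_zero]
      have := congrArg (fun t => (∑ x : Fˣ, ψ (-(c * x)) * χ x)⁻¹ • t) h3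
      simp only [smul_add, smul_smul, inv_mul_cancel₀ hk, one_smul, smul_zero] at this
      rw [add_comm]; exact this
  rw [finrank_eq_sum_dd ψ ρ hψ, sum_split]
  simp only [h0, h1]
  simp [Fintype.card_units]
  have := Fintype.card_pos (α := F)
  omega

lemma dd0_case_B [FiniteDimensional ℂ V] (hψ : ψ.IsPrimitive) (hirr : IrrRep ρ)
    {v : V} (hv0 : v ≠ 0)
    (hv : ∀ y, ρ (uu y) v = v) {χ : Fˣ → ℂ} (hχ : ∀ a, ρ (tt a) v = χ a • v)
    {l : ℂ} (hJ : EE ψ ρ 0 (ρ ww v) = l • v) :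
    (∀ z, ∃ a : ℂ, EE ψ ρ 0 z = a • v) ∧ dd ψ ρ 0 = 1 := by
  have key : ∀ z, ∃ a : ℂ, EE ψ ρ 0 z = a • v := by
    intro z
    obtain ⟨a, b, h⟩ := EE_span ψ ρ hirr hv0 hv hχ 0 z
    refine ⟨a + b * l, ?_⟩
    rw [h, EE_zero_of_fixed ψ ρ hψ hv, hJ]; module
  refine ⟨key, ?_⟩
  have : LinearMap.range (EE ψ ρ 0) = Submodule.span ℂ {v} := by
    apply le_antisymm
    · rintro _ ⟨z, rfl⟩
      obtain ⟨a, h⟩ := key z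
      rw [h]
      exact Submodule.smul_mem _ _ (Submodule.mem_span_singleton_self v)
    · rw [Submodule.span_singleton_le_iff_mem]
      exact ⟨v, EE_zero_of_fixed ψ ρ hψ hv⟩
  rw [dd, this, finrank_span_singleton hv0]

lemma dim_formula [FiniteDimensional ℂ V] (hψ : ψ.IsPrimitive) (hF : ringChar F ≠ 2)
    (c₁ c₀ : F) (hc₁ : c₁ ≠ 0) (hc₀ : c₀ ≠ 0) (hns : ¬ IsSquare (c₁ * c₀)) :
    2 * finrank ℂ V + (dd ψ ρ c₁ + dd ψ ρ c₀) =
      2 * dd ψ ρ 0 + Fintype.card F * (dd ψ ρ c₁ + dd ψ ρ c₀) := by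
  rw [finrank_eq_sum_dd ψ ρ hψ]
  exact sum_sq_classes hF (dd ψ ρ) (fun a c => dd_sq ψ ρ a c) c₁ c₀ hc₁ hc₀ hns

theorem dim_list [FiniteDimensional ℂ V] (hF : ringChar F ≠ 2) (hirr : IrrRep ρ) (hm : ρ mm = 1) :
    finrank ℂ V = 1 ∨ 2 * finrank ℂ V + 1 = Fintype.card F ∨ 2 * finrank ℂ V = Fintype.card F + 1 ∨
    finrank ℂ V + 1 = Fintype.card F ∨ finrank ℂ V = Fintype.card F ∨
    finrank ℂ V = Fintype.card F + 1 := by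
  obtain ⟨ψ, hψ⟩ := exists_prim F
  obtain ⟨c₀, hns⟩ := FiniteField.exists_nonsquare hF
  have hc₀ : c₀ ≠ 0 := by rintro rfl; exact hns (IsSquare.zero)
  have hd := dim_formula ψ ρ hψ hF 1 c₀ one_ne_zero hc₀ (by rwa [one_mul])
  have h1 := dd_le_one ψ ρ hψ hirr (one_ne_zero (α := F))
  have h2 := dd_le_one ψ ρ hψ hirr hc₀
  haveI := hirr.1
  have hpos : 0 < finrank ℂ V := finrank_pos
  by_cases h : ∃ v, EE ψ ρ 0 v ≠ 0
  · obtain ⟨v, hv0, hv, χ, hχ⟩ := exists_borel_eigen ψ ρ hψ h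
    by_cases hJ : ∀ l : ℂ, EE ψ ρ 0 (ρ ww v) ≠ l • v
    · have := dim_case_A ψ ρ hψ hirr hm hv0 hv hχ hJ
      omega
    · push Not at hJ
      obtain ⟨l, hl⟩ := hJ
      have h0 := (dd0_case_B ψ ρ hψ hirr hv0 hv hχ hl).2
      rw [h0] at hd
      interval_cases dd ψ ρ 1 <;> interval_cases dd ψ ρ c₀ <;> omega
  · push Not at h
    have h0 := dd_zero ψ ρ h
    rw [h0] at hd
    interval_cases dd ψ ρ 1 <;> interval_cases dd ψ ρ c₀ <;> omega

theorem dim_of_tt [FiniteDimensional ℂ V] (hψ : ψ.IsPrimitive) (hirr : IrrRep ρ) (hm : ρ mm = 1)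
    (a : Fˣ) (z : V) (hz : ρ (tt (a * a)) (EE ψ ρ 0 z) ≠ EE ψ ρ 0 z) :
    finrank ℂ V = Fintype.card F + 1 := by
  obtain ⟨v, hv0, hv, χ, hχ⟩ := exists_borel_eigen ψ ρ hψ ⟨z, by intro h; simp [h] at hz⟩
  by_cases hJ : ∀ l : ℂ, EE ψ ρ 0 (ρ ww v) ≠ l • v
  · exact dim_case_A ψ ρ hψ hirr hm hv0 hv hχ hJ
  · exfalso
    push Not at hJ
    obtain ⟨l, hl⟩ := hJ
    obtain ⟨t, ht⟩ := (dd0_case_B ψ ρ hψ hirr hv0 hv hχ hl).1 z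
    have hl0 : l ≠ 0 := by
      rintro rfl
      rw [zero_smul] at hl
      exact J_ne_zero ψ ρ hψ hm hv0 hv hχ hl
    have e1 : EE ψ ρ 0 (ρ ww (ρ (tt a) v)) = ρ (tt a⁻¹) (EE ψ ρ 0 (ρ ww v)) := by
      rw [ww_tt_apply, tt_EE_zero]
    rw [hχ, map_smul, map_smul, hl, map_smul, smul_comm] at e1
    have e2 := smul_right_injective V hl0 e1
    apply hz
    rw [ht, map_smul]
    congr 1
    calc ρ (tt (a * a)) v = ρ (tt a) (ρ (tt a) v) := tt_mul_apply ρ a a v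
      _ = ρ (tt a) (χ a • v) := by rw [hχ]
      _ = ρ (tt a) (ρ (tt a⁻¹) v) := by rw [e2]
      _ = v := tt_inv_apply ρ a v

theorem dim_of_J [FiniteDimensional ℂ V] (hψ : ψ.IsPrimitive) (hirr : IrrRep ρ) (hm : ρ mm = 1)
    (v : V) (hv0 : v ≠ 0) (hv : ∀ y, ρ (uu y) v = v) (hχ : ∀ a, ρ (tt a) v = v)
    (hJ : EE ψ ρ 0 (ρ ww v) = (-(Fintype.card F : ℂ)⁻¹) • v) :
    finrank ℂ V = Fintype.card F := by
  classical
  have hχ' : ∀ a, ρ (tt a) v = (fun _ => (1 : ℂ)) a • v := by simpa using hχ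
  have h0 := (dd0_case_B ψ ρ hψ hirr hv0 hv hχ' hJ).2
  have h1 : ∀ c : Fˣ, dd ψ ρ c = 1 := by
    intro c
    apply le_antisymm (dd_le_one ψ ρ hψ hirr c.ne_zero)
    apply dd_pos ψ ρ (v := ρ ww v)
    intro h
    have := EE0_ww_eq ψ ρ hψ hm hv hχ' c
    rw [h, map_zero, map_zero] at this
    have h3 := (smul_eq_zero.1 this.symm).resolve_left (by simp)
    have h4 : (∑ x : Fˣ, ψ (-(c * x)) * 1) = -1 := by
      have e1 := AddChar.sum_mulShift (-(c : F)) hψ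
      rw [sum_split, if_neg (by simp)] at e1
      simp only [mul_one]
      have e2 : ∀ x : Fˣ, ψ ((x : F) * -(c : F)) = ψ (-(c * x)) := fun x => by congr 1; ring
      simp only [e2, zero_mul, AddChar.map_zero_eq_one] at e1
      linear_combination e1
    rw [h4, hJ, smul_smul] at h3
    have h5 : (1 + (Fintype.card F : ℂ)⁻¹) • v = 0 := by
      rw [← h3]; module
    rcases smul_eq_zero.1 h5 with h6 | h6
    · have hq : (Fintype.card F : ℂ) ≠ 0 := card_ne
      field_simp at h6
      have : ((Fintype.card F + 1 : ℕ) : ℂ) = 0 := by push_cast; rw [h6, mul_zero]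
      exact absurd (Nat.cast_eq_zero.1 this) (by omega)
    · exact hv0 h6
  rw [finrank_eq_sum_dd ψ ρ hψ, sum_split]
  simp only [h0, h1]
  simp [Fintype.card_units]
  have := Fintype.card_pos (α := F)
  omega

theorem dim_of_cusp [FiniteDimensional ℂ V] (hψ : ψ.IsPrimitive) (hF : ringChar F ≠ 2)
    (hirr : IrrRep ρ) (h0 : ∀ z, EE ψ ρ 0 z = 0) (c₁ c₀ : F) (hc₁ : c₁ ≠ 0) (hc₀ : c₀ ≠ 0)
    (hns : ¬ IsSquare (c₁ * c₀)) (h1 : ∃ z, EE ψ ρ c₁ z ≠ 0) (h2 : ∃ z, EE ψ ρ c₀ z ≠ 0) :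
    finrank ℂ V + 1 = Fintype.card F := by
  have hd := dim_formula ψ ρ hψ hF c₁ c₀ hc₁ hc₀ hns
  obtain ⟨z1, h1⟩ := h1
  obtain ⟨z2, h2⟩ := h2
  rw [dd_zero ψ ρ h0, le_antisymm (dd_le_one ψ ρ hψ hirr hc₁) (dd_pos ψ ρ h1),
    le_antisymm (dd_le_one ψ ρ hψ hirr hc₀) (dd_pos ψ ρ h2)] at hd
  omega

end SL2c

open Module
set_option linter.unusedSimpArgs false
set_option linter.unusedSectionVars false
section SL2d
variable {F : Type} [Field F]

/-- left regular representation on functions -/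
def reg (G : Type) [Group G] : Representation ℂ G (G → ℂ) where
  toFun g := LinearMap.funLeft ℂ ℂ (fun x => g⁻¹ * x)
  map_one' := by ext f x; simp [LinearMap.funLeft]
  map_mul' g h := by ext f x; simp [LinearMap.funLeft, mul_assoc]

lemma reg_apply (G : Type) [Group G] (g : G) (f : G → ℂ) (x : G) : reg G g f x = f (g⁻¹ * x) := rfl

lemma uu_inv (x : F) : (uu x)⁻¹ = uu (-x) := by
  rw [inv_eq_iff_mul_eq_one, ← uu_add]; simp [uu_zero]
lemma tt_inv (a : Fˣ) : (tt a)⁻¹ = tt a⁻¹ := by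
  rw [inv_eq_iff_mul_eq_one, ← tt_mul]; simp [tt_one]
lemma mm_mm : (mm : Matrix.SpecialLinearGroup (Fin 2) F) * mm = 1 := by
  apply sl2_ext <;> simp [mul_e, mm_e00, mm_e01, mm_e10, mm_e11, one_e00, one_e01, one_e10, one_e11]
lemma mm_inv : (mm : Matrix.SpecialLinearGroup (Fin 2) F)⁻¹ = mm := by
  rw [inv_eq_iff_mul_eq_one, mm_mm]
lemma mm_comm (g : Matrix.SpecialLinearGroup (Fin 2) F) : mm * g = g * mm := by
  apply sl2_ext <;> simp [mul_e, mm_e00, mm_e01, mm_e10, mm_e11]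

/-- even functions -/
def evenFn (F : Type) [Field F] : Submodule ℂ (Matrix.SpecialLinearGroup (Fin 2) F → ℂ) where
  carrier := {f | ∀ g, f (mm * g) = f g}
  add_mem' := by intro a b ha hb g; simp [ha g, hb g]
  zero_mem' := by intro g; rfl
  smul_mem' := by intro c a ha g; simp [ha g]

lemma evenFn_inv (g : Matrix.SpecialLinearGroup (Fin 2) F) (f) (hf : f ∈ evenFn F) :
    reg _ g f ∈ evenFn F := by
  intro x
  rw [reg_apply, reg_apply, ← mul_assoc, ← mm_comm, mul_assoc]
  exact hf _

lemma subRep_mm (W : Submodule ℂ (Matrix.SpecialLinearGroup (Fin 2) F → ℂ))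
    (hW : ∀ g, ∀ v ∈ W, reg _ g v ∈ W) (h : W ≤ evenFn F) : subRep (reg _) W hW mm = 1 := by
  ext f
  change (subRep (reg _) W hW mm f : Matrix.SpecialLinearGroup (Fin 2) F → ℂ) _ = f.1 _
  rw [subRep_coe, reg_apply, mm_inv]
  exact h f.2 _

variable [Fintype F] (ψ : AddChar F ℂ)

lemma EE_sub_coe {V : Type} [AddCommGroup V] [Module ℂ V]
    (ρ : Representation ℂ (Matrix.SpecialLinearGroup (Fin 2) F) V) (W : Submodule ℂ V)
    (hW : ∀ g, ∀ v ∈ W, ρ g v ∈ W) (c : F) (z : W) :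
    (EE ψ (subRep ρ W hW) c z : V) = EE ψ ρ c z := by
  rw [EE_apply, EE_apply]
  simp [subRep_coe]

lemma EE_mem {V : Type} [AddCommGroup V] [Module ℂ V]
    (ρ : Representation ℂ (Matrix.SpecialLinearGroup (Fin 2) F) V) (W : Submodule ℂ V)
    (hW : ∀ g, ∀ v ∈ W, ρ g v ∈ W) (c : F) {z : V} (hz : z ∈ W) : EE ψ ρ c z ∈ W := by
  rw [EE_apply]
  exact W.smul_mem _ (W.sum_mem fun x _ => W.smul_mem _ (hW _ _ hz))

/-- degrees of irreducible representations of SL2 trivial on minus one -/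
def HasDegE (F : Type) [Field F] (d : ℕ) : Prop :=
  ∃ (V : Type) (_ : AddCommGroup V) (_ : Module ℂ V) (_ : FiniteDimensional ℂ V)
    (ρ : Representation ℂ (Matrix.SpecialLinearGroup (Fin 2) F) V), IrrRep ρ ∧ ρ mm = 1 ∧ finrank ℂ V = d

theorem exists_deg_plus (a : Fˣ) (ha : (a : F) ^ 4 ≠ 1) : HasDegE F (Fintype.card F + 1) := by
  classical
  obtain ⟨ψ, hψ⟩ := exists_prim F
  let f : Matrix.SpecialLinearGroup (Fin 2) F → ℂ := fun g => if (g.1 1 0) ^ 2 = 1 then 1 else 0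
  have hfe : f ∈ evenFn F := by
    intro g
    simp only [f, mul_e, mm_e00, mm_e01, mm_e10, mm_e11]
    congr 2; ring
  have hfu : ∀ y, reg _ (uu y) f = f := by
    intro y
    ext g
    rw [reg_apply, uu_inv]
    simp only [f, mul_e, uu_e00, uu_e01, uu_e10, uu_e11]
    congr 2; ring
  have hne : (((reg _ (tt (a * a))) - 1) ∘ₗ EE ψ (reg _) 0) f ≠ 0 := by
    rw [LinearMap.comp_apply, EE_zero_of_fixed ψ _ hψ hfu]
    intro h
    have h1 := congrFun h ww
    rw [LinearMap.sub_apply, Pi.sub_apply, Module.End.one_apply, reg_apply, tt_inv] at h1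
    simp only [f, mul_e, tt_e00, tt_e01, tt_e10, tt_e11, ww_e00, ww_e10] at h1
    rw [if_neg] at h1
    · simp at h1
    · simp
      constructor
      · intro h2; apply ha; linear_combination ((a : F) * a + 1) * h2
      · intro h2; apply ha; linear_combination ((a : F) * a - 1) * h2
  obtain ⟨W, hW, hWe, hirr, v, hvW, hv⟩ := exists_irr_sub (reg _) _ (evenFn F)
    (fun g f hf => evenFn_inv g f hf) ⟨f, hfe, hne⟩
  refine ⟨W, inferInstance, inferInstance, inferInstance, subRep (reg _) W hW, hirr,
    subRep_mm W hW hWe, ?_⟩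
  apply dim_of_tt ψ _ hψ hirr (subRep_mm W hW hWe) a ⟨v, hvW⟩
  intro h
  apply hv
  have := congrArg Subtype.val h
  rw [subRep_coe, EE_sub_coe] at this
  rw [LinearMap.comp_apply, LinearMap.sub_apply, this, Module.End.one_apply, sub_self]

theorem exists_deg_q : HasDegE F (Fintype.card F) := by
  classical
  obtain ⟨ψ, hψ⟩ := exists_prim F
  let f : Matrix.SpecialLinearGroup (Fin 2) F → ℂ := fun g => if g.1 1 0 = 0 then 1 else 0
  have hfe : f ∈ evenFn F := by
    intro g
    simp only [f, mul_e, mm_e00, mm_e01, mm_e10, mm_e11]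
    simp
  have hfu : ∀ y, reg _ (uu y) f = f := by
    intro y
    ext g
    rw [reg_apply, uu_inv]
    simp only [f, mul_e, uu_e00, uu_e01, uu_e10, uu_e11]
    congr 2; ring
  have hft : ∀ a, reg _ (tt a) f = f := by
    intro y
    ext g
    rw [reg_apply, tt_inv]
    simp only [f, mul_e, tt_e00, tt_e01, tt_e10, tt_e11]
    simp
  let P : (Matrix.SpecialLinearGroup (Fin 2) F → ℂ) →ₗ[ℂ] (Matrix.SpecialLinearGroup (Fin 2) F → ℂ) :=
    ∑ a : Fˣ, reg _ (tt a)
  let A := ((EE ψ (reg _) 0 ∘ₗ reg _ ww) - 1) ∘ₗ EE ψ (reg _) 0 ∘ₗ P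
  have hne : A f ≠ 0 := by
    have hPf : P f = (Fintype.card Fˣ : ℂ) • f := by
      simp only [P, LinearMap.sum_apply, hft]
      simp [Nat.cast_smul_eq_nsmul]
    simp only [A, LinearMap.comp_apply]
    rw [hPf, map_smul, EE_zero_of_fixed ψ _ hψ hfu, map_smul]
    intro h
    rcases smul_eq_zero.1 h with h | h
    · exact absurd (Nat.cast_eq_zero.1 h) Fintype.card_ne_zero
    · have h1 := congrFun h 1
      rw [LinearMap.sub_apply, Pi.sub_apply, Module.End.one_apply, LinearMap.comp_apply, EE_apply] at h1
      simp only [Pi.smul_apply, Finset.sum_apply, reg_apply, uu_inv] at h1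
      have h2 : ∀ x : F, f (ww⁻¹ * (uu (-x) * 1)) = 0 := by
        intro x
        have : (ww : Matrix.SpecialLinearGroup (Fin 2) F)⁻¹ = ww * mm := by
          rw [inv_eq_iff_mul_eq_one, ← mul_assoc, ww_ww, mm_mm]
        rw [this]
        simp only [f, mul_e, uu_e00, uu_e01, uu_e10, uu_e11, ww_e00, ww_e01, ww_e10, ww_e11, mm_e00,
          mm_e01, mm_e10, mm_e11, one_e00, one_e10]
        simp
      simp only [h2] at h1
      simp [f, one_e10] at h1
  obtain ⟨W, hW, hWe, hirr, z, hzW, hz⟩ := exists_irr_sub (reg _) A (evenFn F)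
    (fun g f hf => evenFn_inv g f hf) ⟨f, hfe, hne⟩
  have hm := subRep_mm W hW hWe
  refine ⟨W, inferInstance, inferInstance, inferInstance, subRep (reg _) W hW, hirr, hm, ?_⟩
  let ρ := subRep (reg _) W hW
  let v1 : W := EE ψ ρ 0 (∑ a : Fˣ, ρ (tt a) ⟨z, hzW⟩)
  have h1u : ∀ y, ρ (uu y) v1 = v1 := fun y => uu_EE_zero ψ ρ y _
  have h1t : ∀ a, ρ (tt a) v1 = v1 := by
    intro a
    simp only [v1]
    rw [tt_EE_zero, map_sum]
    congr 1
    refine Fintype.sum_equiv (Equiv.mulLeft a) _ _ fun x => ?_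
    rw [Equiv.coe_mulLeft, tt_mul_apply]
  have h1t' : ∀ a, ρ (tt a) v1 = (fun _ => (1 : ℂ)) a • v1 := by simpa using h1t
  have hJJ := EE0_ww_eq ψ ρ hψ hm h1u h1t' 0
  have hJt : ∀ a, ρ (tt a) (EE ψ ρ 0 (ρ ww v1)) = EE ψ ρ 0 (ρ ww v1) := by
    intro a
    rw [tt_EE_zero]
    have := ww_tt_apply ρ a⁻¹ v1
    rw [inv_inv, h1t] at this
    rw [← this]
  apply dim_of_J ψ ρ hψ hirr hm (EE ψ ρ 0 (ρ ww v1) - v1)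
  · intro h
    apply hz
    have := congrArg Subtype.val h
    simp only [A, LinearMap.comp_apply, LinearMap.sub_apply, Module.End.one_apply, P,
      LinearMap.sum_apply]
    simpa only [ρ, v1, Submodule.coe_sub, EE_sub_coe, subRep_coe, Submodule.coe_sum,
      Submodule.coe_zero] using this
  · intro y
    rw [map_sub, uu_EE_zero, h1u]
  · intro a
    rw [map_sub, hJt, h1t]
  · rw [map_sub, map_sub, hJJ]
    have hq : (Fintype.card F : ℂ) ≠ 0 := card_ne
    have hs : (∑ x : Fˣ, ψ (-((0 : F) * x)) * 1) = (Fintype.card F : ℂ) - 1 := by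
      simp [Fintype.card_units, Nat.cast_sub Fintype.card_pos]
    rw [hs]
    match_scalars <;> field_simp <;> ring

end SL2d

open Module
set_option linter.unusedSimpArgs false
set_option linter.unusedSectionVars false
section SL2e
variable {F : Type} [Field F] (ψ : AddChar F ℂ)

/-- even Whittaker functions -/
def whit : Submodule ℂ (Matrix.SpecialLinearGroup (Fin 2) F → ℂ) where
  carrier := {f | (∀ g, f (mm * g) = f g) ∧ ∀ g x, f (g * uu x) = ψ x * f g}
  add_mem' := by
    rintro a b ⟨ha, ha'⟩ ⟨hb, hb'⟩
    refine ⟨fun g => by simp [ha g, hb g], fun g x => by simp [ha' g x, hb' g x, mul_add]⟩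
  zero_mem' := ⟨fun g => rfl, fun g x => by simp⟩
  smul_mem' := by
    rintro c a ⟨ha, ha'⟩
    refine ⟨fun g => by simp [ha g], fun g x => by simp [ha' g x, mul_left_comm]⟩

lemma whit_inv (g : Matrix.SpecialLinearGroup (Fin 2) F) (f) (hf : f ∈ whit ψ) :
    reg _ g f ∈ whit ψ := by
  refine ⟨evenFn_inv g f hf.1, fun h x => ?_⟩
  rw [reg_apply, reg_apply, ← mul_assoc]
  exact hf.2 _ _

/-- U-fixed vectors of an invariant subspace -/
def ufix : Submodule ℂ (Matrix.SpecialLinearGroup (Fin 2) F → ℂ) where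
  carrier := {f | f ∈ whit ψ ∧ ∀ y, reg _ (uu y) f = f}
  add_mem' := by
    rintro a b ⟨ha, ha'⟩ ⟨hb, hb'⟩
    exact ⟨add_mem ha hb, fun y => by rw [map_add, ha', hb']⟩
  zero_mem' := ⟨zero_mem _, fun y => map_zero _⟩
  smul_mem' := by
    rintro c a ⟨ha, ha'⟩
    exact ⟨Submodule.smul_mem _ _ ha, fun y => by rw [map_smul, ha']⟩

/-- twisting operator -/
noncomputable def theta (c : F) : (Matrix.SpecialLinearGroup (Fin 2) F → ℂ) →ₗ[ℂ]
    (Matrix.SpecialLinearGroup (Fin 2) F → ℂ) :=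
  letI := Classical.decEq F
  { toFun := fun f g => if g.1 1 0 = 0 then 0 else ψ (-(c * (g.1 0 0 / g.1 1 0))) * f g
    map_add' := by intro a b; ext g; simp only [Pi.add_apply]; split_ifs <;> ring
    map_smul' := by
      intro t a; ext g; simp only [Pi.smul_apply, smul_eq_mul, RingHom.id_apply]
      split_ifs <;> ring }

lemma theta_apply (c : F) (f) (g : Matrix.SpecialLinearGroup (Fin 2) F) :
    letI := Classical.decEq F
    theta ψ c f g = if g.1 1 0 = 0 then 0 else ψ (-(c * (g.1 0 0 / g.1 1 0))) * f g := rfl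

variable [Fintype F]

lemma psi_ne (x : F) : ψ x ≠ 0 := by
  intro h
  have := psi_neg_mul ψ x
  rw [h, mul_zero] at this
  exact zero_ne_one this

lemma ufix_EE (hψ : ψ.IsPrimitive) {f} (hf : f ∈ whit ψ) : EE ψ (reg _) 0 f ∈ ufix ψ :=
  ⟨EE_mem ψ _ _ (fun g f hf => whit_inv ψ g f hf) 0 hf, fun y => uu_EE_zero ψ _ y f⟩

lemma ufix_tt (hψ : ψ.IsPrimitive) (a : Fˣ) {f} (hf : f ∈ ufix ψ) : reg _ (tt a) f ∈ ufix ψ := by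
  have := EE_zero_of_fixed ψ (reg _) hψ hf.2
  rw [← this, tt_EE_zero]
  exact ufix_EE ψ hψ (whit_inv ψ _ _ hf.1)

lemma ufix_borel (hψ : ψ.IsPrimitive) {f} (hf : f ∈ ufix ψ)
    (g : Matrix.SpecialLinearGroup (Fin 2) F) (hg : g.1 1 0 = 0) : f g = 0 := by
  obtain ⟨a, y, rfl⟩ := bruhat0 g hg
  rw [hf.1.2]
  have key : ∀ x, ψ x * f (tt a) = f (tt a) := by
    intro x
    rw [← hf.1.2, tt_uu]
    have := congrFun (hf.2 (-((a : F) ^ 2 * x))) (tt a)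
    rw [reg_apply, uu_inv, neg_neg] at this
    exact this
  obtain ⟨x, hx⟩ : ∃ x, ψ x ≠ 1 := by
    by_contra hcon
    push Not at hcon
    apply hψ (one_ne_zero (α := F))
    ext x
    simp [AddChar.mulShift_apply, hcon]
  have h1 : (ψ x - 1) * f (tt a) = 0 := by rw [sub_mul, key]; ring
  rcases mul_eq_zero.1 h1 with h | h
  · exact absurd (sub_eq_zero.1 h) hx
  · rw [h, mul_zero]

lemma theta_inj (hψ : ψ.IsPrimitive) (c : F) {f} (hf : f ∈ ufix ψ) (h : theta ψ c f = 0) : f = 0 := by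
  ext g
  by_cases hg : g.1 1 0 = 0
  · exact ufix_borel ψ hψ hf g hg
  · have := congrFun h g
    rw [theta_apply, if_neg hg] at this
    exact (mul_eq_zero.1 this).resolve_left (psi_ne ψ _)

lemma theta_whit (c : F) {f} (hf : f ∈ ufix ψ) : theta ψ c f ∈ whit ψ := by
  classical
  constructor
  · intro g
    rw [theta_apply, theta_apply, hf.1.1]
    simp only [mul_e, mm_e00, mm_e01, mm_e10, mm_e11]
    simp [neg_div_neg_eq]
  · intro g x
    rw [theta_apply, theta_apply, hf.1.2]
    simp only [mul_e, uu_e00, uu_e01, uu_e10, uu_e11]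
    simp only [mul_one, mul_zero, add_zero]
    split_ifs <;> ring

lemma theta_EE (hψ : ψ.IsPrimitive) (c : F) {f} (hf : f ∈ ufix ψ) :
    EE ψ (reg _) c (theta ψ c f) = theta ψ c f := by
  classical
  have := EE_of_eigen ψ (reg _) hψ c c (theta ψ c f) ?_
  · simpa using this
  intro y
  ext g
  have hfy := congrFun (hf.2 y) g
  rw [reg_apply, uu_inv] at hfy
  rw [reg_apply, uu_inv, Pi.smul_apply, theta_apply, theta_apply, hfy]
  simp only [mul_e, uu_e00, uu_e01, uu_e10, uu_e11, one_mul, zero_mul, zero_add, smul_eq_mul]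
  split_ifs with h
  · simp
  · rw [← mul_assoc, ← AddChar.map_add_eq_mul]
    congr 2
    field_simp
    ring

lemma L_not_inj (hψ : ψ.IsPrimitive) {c : F} (hc : c ≠ 0) (a : Fˣ) (ha : (a : F) ^ 4 ≠ 1) :
    ∃ f ∈ ufix ψ, EE ψ (reg _) c (reg _ ww f) = 0 ∧ f ≠ 0 := by
  classical
  by_contra hcon
  push Not at hcon
  -- restrict to the Whittaker space so that minus one acts trivially
  have hW := fun g f hf => whit_inv ψ (F := F) g f hf
  let ρ := subRep (reg _) (whit ψ) hW
  have hm : ρ mm = 1 := subRep_mm (whit ψ) hW (fun f hf => hf.1)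
  have hinj : ∀ f : whit ψ, (∀ y, ρ (uu y) f = f) → EE ψ ρ c (ρ ww f) = 0 → f = 0 := by
    intro f hf h
    apply Subtype.ext
    by_contra h0
    refine h0 (hcon f.1 ⟨f.2, fun y => ?_⟩ ?_)
    · exact congrArg Subtype.val (hf y)
    · have := congrArg Subtype.val h
      rwa [EE_sub_coe, subRep_coe] at this
  have httu : ∀ (f : whit ψ), (∀ y, ρ (uu y) f = f) → ∀ b y, ρ (uu y) (ρ (tt b) f) = ρ (tt b) f := by
    intro f hf b y
    rw [← EE_zero_of_fixed ψ ρ hψ hf, tt_EE_zero, uu_EE_zero]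
  -- J as a combination of torus elements
  have hJ : ∀ f : whit ψ, (∀ y, ρ (uu y) f = f) → EE ψ ρ 0 (ρ ww f) =
      (Fintype.card F : ℂ)⁻¹ • ∑ x : Fˣ, ψ (-(0 * x) - c * (x : F)⁻¹) • ρ (tt x) f := by
    intro f hf
    have h1 := bruhat_rel ψ ρ hm 0 c f hf
    rw [EE_ne_of_fixed ψ ρ hψ hc hf, zero_add] at h1
    rw [← sub_eq_zero]
    apply hinj
    · intro y
      simp only [map_sub, uu_EE_zero, map_smul, map_sum, httu f hf]
    · simp only [map_sub, map_smul, map_sum]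
      rw [h1, sub_self]
  have hJt : ∀ f b, EE ψ ρ 0 (ρ ww (ρ (tt b) f)) = ρ (tt b⁻¹) (EE ψ ρ 0 (ρ ww f)) := by
    intro f b
    rw [ww_tt_apply, tt_EE_zero]
  have hJt' : ∀ f : whit ψ, (∀ y, ρ (uu y) f = f) → ∀ b,
      EE ψ ρ 0 (ρ ww (ρ (tt b) f)) = ρ (tt b) (EE ψ ρ 0 (ρ ww f)) := by
    intro f hf b
    rw [hJ f hf, hJ _ (httu f hf b), map_smul, map_sum]
    congr 1
    refine Fintype.sum_congr _ _ fun x => ?_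
    rw [map_smul, ← tt_mul_apply, ← tt_mul_apply, mul_comm b x]
  have hJinj : ∀ f : whit ψ, (∀ y, ρ (uu y) f = f) → EE ψ ρ 0 (ρ ww f) = 0 → f = 0 := by
    intro f hf h
    have h1 := bruhat_rel ψ ρ hm 0 0 f hf
    simp only [hJt, h, map_zero, smul_zero, Finset.sum_const_zero, add_zero,
      EE_zero_of_fixed ψ ρ hψ hf] at h1
    exact (smul_eq_zero.1 h1.symm).resolve_left (by simp)
  have hfix : ∀ f : whit ψ, (∀ y, ρ (uu y) f = f) → ρ (tt (a * a)) f = f := by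
    intro f hf
    rw [← sub_eq_zero]
    apply hJinj
    · intro y
      rw [map_sub, httu f hf, hf]
    · rw [map_sub, map_sub, tt_mul_apply, hJt' _ (httu f hf a), hJt, tt_inv_apply, sub_self]
  let f : Matrix.SpecialLinearGroup (Fin 2) F → ℂ :=
    fun g => if (g.1 1 0) ^ 2 = 1 then ψ (g.1 1 1 / g.1 1 0) else 0
  have hfW : f ∈ whit ψ := by
    constructor
    · intro g
      simp only [f, mul_e, mm_e00, mm_e01, mm_e10, mm_e11]
      simp [neg_div_neg_eq]
    · intro g x
      simp only [f, mul_e, uu_e00, uu_e01, uu_e10, uu_e11, mul_one, mul_zero, add_zero]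
      split_ifs with h
      · have : g.1 1 0 ≠ 0 := by intro h0; simp [h0] at h
        rw [← AddChar.map_add_eq_mul]
        congr 1
        field_simp
      · simp
  have hfu : ∀ y, ρ (uu y) ⟨f, hfW⟩ = ⟨f, hfW⟩ := by
    intro y
    apply Subtype.ext
    rw [subRep_coe]
    ext g
    rw [reg_apply, uu_inv]
    simp only [f, mul_e, uu_e00, uu_e01, uu_e10, uu_e11, zero_mul, one_mul, zero_add]
  have h := congrArg Subtype.val (hfix ⟨f, hfW⟩ hfu)
  rw [subRep_coe] at h
  have h1 := congrFun h ww
  rw [reg_apply, tt_inv] at h1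
  simp only [f, mul_e, tt_e00, tt_e01, tt_e10, tt_e11, ww_e00, ww_e10, ww_e01, ww_e11] at h1
  rw [if_neg] at h1
  · simp at h1
  · simp
    constructor
    · intro h2; apply ha; linear_combination ((a : F) * a + 1) * h2
    · intro h2; apply ha; linear_combination ((a : F) * a - 1) * h2

theorem exists_deg_minus (hF : ringChar F ≠ 2) (a : Fˣ) (ha : (a : F) ^ 4 ≠ 1) :
    ∃ d, HasDegE F d ∧ d + 1 = Fintype.card F := by
  classical
  obtain ⟨ψ, hψ⟩ := exists_prim F
  obtain ⟨c₀, hns⟩ := FiniteField.exists_nonsquare hF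
  have hc₀ : c₀ ≠ 0 := by rintro rfl; exact hns (IsSquare.zero)
  obtain ⟨c, hc, hcs⟩ : ∃ c : F, c ≠ 0 ∧ ¬ IsSquare (c * (-1)) :=
    ⟨-c₀, neg_ne_zero.2 hc₀, by simpa using hns⟩
  have hW := fun g f hf => whit_inv ψ (F := F) g f hf
  let E := EE ψ (reg (Matrix.SpecialLinearGroup (Fin 2) F)) c
  let L : (Matrix.SpecialLinearGroup (Fin 2) F → ℂ) →ₗ[ℂ] (Matrix.SpecialLinearGroup (Fin 2) F → ℂ) := E ∘ₗ reg (Matrix.SpecialLinearGroup (Fin 2) F) ww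
  -- dimension count
  have hdim : finrank ℂ ((ufix ψ).map L) < finrank ℂ ((whit ψ).map E) := by
    obtain ⟨f, hf, hf0, hfne⟩ := L_not_inj ψ hψ hc a ha
    have h1 : finrank ℂ ((ufix ψ).map L) < finrank ℂ (ufix ψ) := by
      have := LinearMap.finrank_range_add_finrank_ker (L.domRestrict (ufix ψ))
      rw [LinearMap.range_domRestrict] at this
      have hk : 0 < finrank ℂ (LinearMap.ker (L.domRestrict (ufix ψ))) := by
        rw [Nat.pos_iff_ne_zero]
        intro h0
        rw [Submodule.finrank_eq_zero] at h0
        have hmem : (⟨f, hf⟩ : ufix ψ) ∈ LinearMap.ker (L.domRestrict (ufix ψ)) := hf0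
        rw [h0] at hmem
        exact hfne (congrArg Subtype.val ((Submodule.mem_bot _).1 hmem))
      omega
    have h2 : finrank ℂ (ufix ψ) ≤ finrank ℂ ((whit ψ).map E) := by
      have hmap : ∀ f ∈ ufix ψ, theta ψ c f ∈ (whit ψ).map E := fun f hf =>
        ⟨theta ψ c f, theta_whit ψ c hf, theta_EE ψ hψ c hf⟩
      apply LinearMap.finrank_le_finrank_of_injective (f := (theta ψ c).restrict hmap)
      rw [← LinearMap.ker_eq_bot, Submodule.eq_bot_iff]
      rintro ⟨f, hf⟩ hf0
      apply Subtype.ext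
      exact theta_inj ψ hψ c hf (congrArg Subtype.val hf0)
    omega
  -- the span of the U-fixed vectors
  let W0 : Submodule ℂ (Matrix.SpecialLinearGroup (Fin 2) F → ℂ) := Submodule.span ℂ {x | ∃ g, ∃ f ∈ ufix ψ, x = reg (Matrix.SpecialLinearGroup (Fin 2) F) g f}
  have hW0inv : ∀ g, ∀ f ∈ W0, reg (Matrix.SpecialLinearGroup (Fin 2) F) g f ∈ W0 := by
    intro g f hf
    induction hf using Submodule.span_induction with
    | zero => rw [map_zero]; exact W0.zero_mem
    | add x y _ _ hx hy => rw [map_add]; exact W0.add_mem hx hy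
    | smul t x _ hx => rw [map_smul]; exact W0.smul_mem _ hx
    | mem x hx =>
      obtain ⟨h, f, hf, rfl⟩ := hx
      rw [← Module.End.mul_apply, ← map_mul]
      exact Submodule.subset_span ⟨g * h, f, hf, rfl⟩
  have hW0W : W0 ≤ whit ψ := by
    rw [Submodule.span_le]
    rintro _ ⟨g, f, hf, rfl⟩
    exact hW g f hf.1
  have hufW0 : ufix ψ ≤ W0 := fun f hf => Submodule.subset_span ⟨1, f, hf, by rw [map_one]; rfl⟩
  have hEW0 : ∀ f ∈ W0, E f ∈ (ufix ψ).map L := by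
    intro f hf
    induction hf using Submodule.span_induction with
    | zero => rw [map_zero]; exact Submodule.zero_mem _
    | add x y _ _ hx hy => rw [map_add]; exact Submodule.add_mem _ hx hy
    | smul t x _ hx => rw [map_smul]; exact Submodule.smul_mem _ _ hx
    | mem x hx =>
      obtain ⟨g, f, hf, rfl⟩ := hx
      by_cases hg : g.1 1 0 = 0
      · obtain ⟨b, y, rfl⟩ := bruhat0 g hg
        rw [map_mul, Module.End.mul_apply, hf.2]
        have : E (reg (Matrix.SpecialLinearGroup (Fin 2) F) (tt b) f) = 0 := EE_ne_of_fixed ψ _ hψ hc (ufix_tt ψ hψ b hf).2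
        rw [this]
        exact Submodule.zero_mem _
      · rw [bruhat1 g (Units.mk0 _ hg) rfl]
        simp only [map_mul, Module.End.mul_apply, hf.2, E, EE_uu]
        apply Submodule.smul_mem
        exact ⟨_, ufix_tt ψ hψ _ hf, rfl⟩
  obtain ⟨W1, hW1, hcompl⟩ := maschke (reg (Matrix.SpecialLinearGroup (Fin 2) F)) W0 hW0inv
  have hex : ∃ v ∈ whit ψ ⊓ W1, E v ≠ 0 := by
    by_contra hcon
    push Not at hcon
    have : (whit ψ).map E ≤ (ufix ψ).map L := by
      rintro _ ⟨f, hf, rfl⟩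
      obtain ⟨x, hx, y, hy, hxy⟩ := Submodule.mem_sup.1 (hcompl.sup_eq_top ▸ Submodule.mem_top (x := f))
      have hyW : y ∈ whit ψ := by
        have : y = f - x := by rw [← hxy]; simp
        rw [this]
        exact sub_mem hf (hW0W hx)
      rw [← hxy, map_add, hcon y ⟨hyW, hy⟩, add_zero]
      exact hEW0 x hx
    have := Submodule.finrank_mono this
    omega
  obtain ⟨X, hX, hXle, hirr, v, hvX, hv⟩ := exists_irr_sub (reg (Matrix.SpecialLinearGroup (Fin 2) F)) E (whit ψ ⊓ W1)
    (fun g f hf => ⟨hW g f hf.1, hW1 g f hf.2⟩) hex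
  have hXe : X ≤ evenFn F := fun f hf => (hXle hf).1.1
  refine ⟨finrank ℂ X, ⟨X, inferInstance, inferInstance, inferInstance, subRep (reg (Matrix.SpecialLinearGroup (Fin 2) F)) X hX, hirr,
    subRep_mm X hX hXe, rfl⟩, ?_⟩
  apply dim_of_cusp ψ (subRep (reg (Matrix.SpecialLinearGroup (Fin 2) F)) X hX) hψ hF hirr ?_ c (-1) hc (by simp) hcs
  · refine ⟨⟨v, hvX⟩, fun h => hv ?_⟩
    have := congrArg Subtype.val h
    rwa [EE_sub_coe] at this
  · haveI := hirr.1
    obtain ⟨⟨f, hf⟩, hf0⟩ := exists_ne (0 : X)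
    have hf0' : f ≠ 0 := fun h => hf0 (Subtype.ext h)
    obtain ⟨g, hg⟩ := Function.ne_iff.1 hf0'
    refine ⟨⟨reg (Matrix.SpecialLinearGroup (Fin 2) F) g⁻¹ f, hX _ _ hf⟩, fun h => ?_⟩
    have h1 := congrArg Subtype.val h
    rw [EE_sub_coe] at h1
    have h2 := congrFun h1 1
    rw [EE_apply] at h2
    have hw := (hXle (hX g⁻¹ f hf)).1.2 1
    simp only [Pi.smul_apply, Finset.sum_apply, smul_eq_mul] at h2
    have h3 : ∀ x : F, ψ (-(-1 * x)) * (reg (Matrix.SpecialLinearGroup (Fin 2) F) (uu x) (reg (Matrix.SpecialLinearGroup (Fin 2) F) g⁻¹ f)) 1 = f g := by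
      intro x
      rw [reg_apply, uu_inv, mul_one]
      have := hw (-x)
      rw [one_mul] at this
      rw [this, ← mul_assoc, neg_mul, one_mul, neg_neg, mul_comm (ψ x), psi_neg_mul, one_mul, reg_apply, mul_one, inv_inv]
    simp only [h3] at h2
    simp at h2
    exact hg h2
  · intro z
    apply Subtype.ext
    rw [EE_sub_coe]
    have hz := hXle z.2
    have h1 : EE ψ (reg (Matrix.SpecialLinearGroup (Fin 2) F)) 0 z ∈ W0 := hufW0 (ufix_EE ψ hψ hz.1)
    have h2 : EE ψ (reg (Matrix.SpecialLinearGroup (Fin 2) F)) 0 z ∈ W1 := EE_mem ψ _ _ hW1 0 hz.2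
    exact (Submodule.disjoint_def.1 hcompl.disjoint) _ h1 h2

end SL2e

open Module
set_option linter.unusedSimpArgs false
set_option linter.unusedSectionVars false
section PSL

lemma center_sub {F : Type} [Field F] {h : Matrix.SpecialLinearGroup (Fin 2) F}
    (hh : h ∈ Subgroup.center (Matrix.SpecialLinearGroup (Fin 2) F)) : h = 1 ∨ h = mm := by
  obtain ⟨r, hr, hs⟩ := Matrix.SpecialLinearGroup.mem_center_iff.1 hh
  rw [Fintype.card_fin] at hr
  have e : ∀ i j, h.1 i j = Matrix.scalar (Fin 2) r i j := fun i j => by rw [hs]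
  rcases sq_eq_one_iff.1 hr with rfl | rfl
  · left
    apply sl2_ext <;> rw [e] <;> simp [one_e00, one_e01, one_e10, one_e11]
  · right
    apply sl2_ext <;> rw [e] <;> simp [mm_e00, mm_e01, mm_e10, mm_e11]

lemma hasDeg_psl (F : Type) [Field F] (d : ℕ) :
    HasDeg (Matrix.SpecialLinearGroup (Fin 2) F ⧸
      Subgroup.center (Matrix.SpecialLinearGroup (Fin 2) F)) d ↔ HasDegE F d := by
  constructor
  · rintro ⟨V, _, _, _, ρ, hirr, hd⟩
    refine ⟨V, inferInstance, inferInstance, inferInstance,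
      MonoidHom.comp ρ (QuotientGroup.mk' _), ⟨hirr.1, ?_⟩, ?_, hd⟩
    · intro W hW
      apply hirr.2 W
      intro g v hv
      obtain ⟨g, rfl⟩ := QuotientGroup.mk'_surjective _ g
      exact hW g v hv
    · have hmem : (mm : Matrix.SpecialLinearGroup (Fin 2) F) ∈
          Subgroup.center (Matrix.SpecialLinearGroup (Fin 2) F) := by
        rw [Subgroup.mem_center_iff]
        intro g
        exact (mm_comm g).symm
      have : QuotientGroup.mk' (Subgroup.center (Matrix.SpecialLinearGroup (Fin 2) F)) mm = 1 :=
        (QuotientGroup.eq_one_iff _).2 hmem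
      rw [MonoidHom.comp_apply, this, map_one]
  · rintro ⟨V, _, _, _, ρ, hirr, hm, hd⟩
    have hk : ∀ g ∈ Subgroup.center (Matrix.SpecialLinearGroup (Fin 2) F), ρ g = 1 := by
      intro g hg
      rcases center_sub hg with rfl | rfl
      · exact map_one ρ
      · exact hm
    refine ⟨V, inferInstance, inferInstance, inferInstance,
      QuotientGroup.lift (Subgroup.center (Matrix.SpecialLinearGroup (Fin 2) F)) ρ hk, ⟨hirr.1, ?_⟩, hd⟩
    intro W hW
    apply hirr.2 W
    intro g v hv
    exact hW (QuotientGroup.mk g) v hv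

lemma exists_pow4 (F : Type) [Field F] [Fintype F] (h : 5 < Fintype.card F) :
    ∃ a : Fˣ, (a : F) ^ 4 ≠ 1 := by
  classical
  obtain ⟨g, hg⟩ := IsCyclic.exists_generator (α := Fˣ)
  refine ⟨g, fun h4 => ?_⟩
  have h1 : orderOf g = Fintype.card F - 1 := by
    rw [orderOf_eq_card_of_forall_mem_zpowers hg, Nat.card_eq_fintype_card, Fintype.card_units]
  have h2 : g ^ 4 = 1 := Units.ext (by simpa using h4)
  have h3 := Nat.le_of_dvd (by norm_num) (orderOf_dvd_of_pow_eq_one h2)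
  omega

theorem psl_degrees (F : Type) [Field F] [Fintype F] (h5 : 5 < Fintype.card F)
    (hodd : Fintype.card F % 2 = 1) :
    (∀ d, HasDeg (Matrix.SpecialLinearGroup (Fin 2) F ⧸
      Subgroup.center (Matrix.SpecialLinearGroup (Fin 2) F)) d →
      d ∣ Fintype.card F - 1 ∨ d ∣ Fintype.card F ∨ d ∣ Fintype.card F + 1) ∧
    HasDeg (Matrix.SpecialLinearGroup (Fin 2) F ⧸
      Subgroup.center (Matrix.SpecialLinearGroup (Fin 2) F)) (Fintype.card F - 1) ∧
    HasDeg (Matrix.SpecialLinearGroup (Fin 2) F ⧸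
      Subgroup.center (Matrix.SpecialLinearGroup (Fin 2) F)) (Fintype.card F) ∧
    HasDeg (Matrix.SpecialLinearGroup (Fin 2) F ⧸
      Subgroup.center (Matrix.SpecialLinearGroup (Fin 2) F)) (Fintype.card F + 1) := by
  have hF : ringChar F ≠ 2 := by
    intro h
    have := FiniteField.even_card_iff_char_two.1 h
    omega
  obtain ⟨a, ha⟩ := exists_pow4 F h5
  refine ⟨?_, ?_, ?_, ?_⟩
  · intro d hd
    rw [hasDeg_psl] at hd
    obtain ⟨V, _, _, _, ρ, hirr, hm, rfl⟩ := hd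
    rcases dim_list ρ hF hirr hm with h | h | h | h | h | h
    · left; rw [h]; exact one_dvd _
    · left; exact ⟨2, by omega⟩
    · right; right; exact ⟨2, by omega⟩
    · left; rw [← h]; simp
    · right; left; rw [h]
    · right; right; rw [h]
  · rw [hasDeg_psl]
    obtain ⟨d, hd, h⟩ := exists_deg_minus hF a ha
    rw [← h]; simpa using hd
  · rw [hasDeg_psl]; exact exists_deg_q
  · rw [hasDeg_psl]; exact exists_deg_plus a ha

end PSL

section Final

/-- the arithmetic part -/
theorem combinatorics (n : ℕ) (hn : 1 ≤ n) (p f : Fin n → ℕ)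
    (hp : ∀ i, (p i).Prime) (hp5 : ∀ i, 5 < p i) (hf : ∀ i, 1 ≤ f i)
    (hminus : ∀ i, (((p i ^ f i - 1).primeFactors) \ {2, 3}).card = 1)
    (hplus : ∀ i, (((p i ^ f i + 1).primeFactors) \ {2, 3}).card = 1)
    (hdisj : ∀ r s : Fin n, r ≠ s →
      (insert (p r) ((p r ^ f r) ^ 2 - 1).primeFactors) ∩
        (insert (p s) ((p s ^ f s) ^ 2 - 1).primeFactors) = ({2, 3} : Finset ℕ))
    (X : Fin n → Set ℕ) (hX1 : ∀ i, 1 ∈ X i)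
    (hX : ∀ i, ∀ d ∈ X i, d ∣ p i ^ f i - 1 ∨ d ∣ p i ^ f i ∨ d ∣ p i ^ f i + 1)
    (hXm : ∀ i, p i ^ f i - 1 ∈ X i) (hXq : ∀ i, p i ^ f i ∈ X i) (hXp : ∀ i, p i ^ f i + 1 ∈ X i)
    (Y : Set ℕ) (hY : ∀ d, d ∈ Y ↔ ∃ D : Fin n → ℕ, (∀ i, D i ∈ X i) ∧ d = ∏ i, D i) :
    {r : ℕ | r.Prime ∧ ∃ m ∈ Y, r ∣ m}.ncard = 3 * n + 2 ∧
    sSup {k | ∃ m ∈ Y, k = m.primeFactors.card} = n + 2 := by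
  classical
  set q : Fin n → ℕ := fun i => p i ^ f i with hq
  have hq' : ∀ i, p i ^ f i = q i := fun i => rfl
  simp only [hq'] at *
  have hpq : ∀ i, p i ∣ q i := fun i => dvd_pow_self _ (by have := hf i; omega)
  have hq5 : ∀ i, 5 < q i := fun i =>
    lt_of_lt_of_le (hp5 i) (Nat.le_of_dvd (pow_pos (hp i).pos _) (hpq i))
  have hpr : ∀ i r, r.Prime → r ∣ q i → r = p i := fun i r hr h =>
    (Nat.prime_dvd_prime_iff_eq hr (hp i)).1 (hr.dvd_of_dvd_pow h)
  have hq2 : ∀ i, ¬ 2 ∣ q i := fun i h => by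
    have := hpr i 2 Nat.prime_two h
    have := hp5 i; omega
  have hq3 : ∀ i, ¬ 3 ∣ q i := fun i h => by
    have := hpr i 3 Nat.prime_three h
    have := hp5 i; omega
  have hsq : ∀ i, (q i) ^ 2 - 1 = (q i - 1) * (q i + 1) := fun i => by
    rw [Nat.mul_comm, ← Nat.sq_sub_sq]
  have hpf : ∀ i, ((q i) ^ 2 - 1).primeFactors = (q i - 1).primeFactors ∪ (q i + 1).primeFactors := by
    intro i
    rw [hsq, Nat.primeFactors_mul (by have := hq5 i; omega) (by omega)]
  -- the sets T
  let T : Fin n → Finset ℕ := fun i => (insert (p i) ((q i) ^ 2 - 1).primeFactors) \ {2, 3}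
  have hT : ∀ i, T i = {p i} ∪ ((q i - 1).primeFactors \ {2, 3} ∪ (q i + 1).primeFactors \ {2, 3}) := by
    intro i
    simp only [T, hpf]
    ext r
    have := hp5 i
    simp only [Finset.mem_sdiff, Finset.mem_insert, Finset.mem_union, Finset.mem_singleton]
    constructor
    · tauto
    · rintro (h | h | h)
      · subst h; exact ⟨Or.inl rfl, by omega⟩
      · tauto
      · tauto
  have hTcard : ∀ i, (T i).card = 3 := by
    intro i
    have := hp5 i
    rw [hT, Finset.card_union_of_disjoint, Finset.card_union_of_disjoint, hminus, hplus]
    · simp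
    · rw [Finset.disjoint_left]
      intro r h1 h2
      simp only [Finset.mem_sdiff, Nat.mem_primeFactors, Finset.mem_insert, Finset.mem_singleton] at h1 h2
      have h3 := Nat.dvd_sub h2.1.2.1 h1.1.2.1
      have h4 : q i + 1 - (q i - 1) = 2 := by have := hq5 i; omega
      rw [h4] at h3
      have := (Nat.prime_dvd_prime_iff_eq h1.1.1 Nat.prime_two).1 h3
      tauto
    · rw [Finset.disjoint_singleton_left]
      simp only [Finset.mem_union, Finset.mem_sdiff, Nat.mem_primeFactors]
      have hq5 := hq5 i
      rintro (h | h)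
      · have h3 := Nat.dvd_sub (hpq i) h.1.2.1
        rw [show q i - (q i - 1) = 1 by omega] at h3
        exact (hp i).one_lt.ne' (Nat.dvd_one.1 h3)
      · have h3 := Nat.dvd_sub h.1.2.1 (hpq i)
        rw [show q i + 1 - q i = 1 by omega] at h3
        exact (hp i).one_lt.ne' (Nat.dvd_one.1 h3)
  have hTdisj : ∀ i j, i ≠ j → Disjoint (T i) (T j) := by
    intro i j hij
    rw [Finset.disjoint_left]
    intro r h1 h2
    simp only [T, Finset.mem_sdiff] at h1 h2
    have : r ∈ ({2, 3} : Finset ℕ) := by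
      rw [← hdisj i j hij]
      exact Finset.mem_inter.2 ⟨h1.1, h2.1⟩
    exact h1.2 this
  have hT23 : ∀ i, Disjoint ({2, 3} : Finset ℕ) (T i) := fun i => Finset.disjoint_sdiff
  -- single degrees
  have hsingle : ∀ i, ∀ d ∈ X i, d ∈ Y := by
    intro i d hd
    rw [hY]
    refine ⟨Function.update (fun _ => 1) i d, ?_, ?_⟩
    · intro j
      by_cases h : j = i
      · subst h; simpa using hd
      · simpa [h] using hX1 j
    · rw [Finset.prod_update_of_mem (Finset.mem_univ i)]; simp
  have h3 : ∀ i, ∃ e, (e = q i - 1 ∨ e = q i + 1) ∧ 2 ∣ e ∧ 3 ∣ e := by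
    intro i
    have a1 := hq2 i
    have a2 := hq3 i
    have a3 := hq5 i
    by_cases h : 3 ∣ q i - 1
    · exact ⟨q i - 1, Or.inl rfl, by omega, h⟩
    · have b : q i % 3 = 0 ∨ q i % 3 = 1 ∨ q i % 3 = 2 := by omega
      rcases b with b | b | b
      · exact absurd (Nat.dvd_of_mod_eq_zero b) a2
      · exact absurd (Nat.dvd_of_mod_eq_zero (by omega)) h
      · exact ⟨q i + 1, Or.inr rfl, by omega, Nat.dvd_of_mod_eq_zero (by omega)⟩
  choose e he he2 he3 using h3
  have heX : ∀ i, e i ∈ X i := by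
    intro i
    rcases he i with h | h
    · rw [h]; exact hXm i
    · rw [h]; exact hXp i
  have hXne : ∀ i, ∀ d ∈ X i, d ≠ 0 := by
    intro i d hd h0
    subst h0
    have a3 := hq5 i
    rcases hX i 0 hd with h | h | h <;> rw [Nat.zero_dvd] at h <;> omega
  let i0 : Fin n := ⟨0, hn⟩
  constructor
  · have hset : {r : ℕ | r.Prime ∧ ∃ m ∈ Y, r ∣ m} =
        ((({2, 3} : Finset ℕ) ∪ Finset.univ.biUnion T : Finset ℕ) : Set ℕ) := by
      ext r
      simp only [Set.mem_setOf_eq, Finset.mem_coe, Finset.mem_union, Finset.mem_biUnion,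
        Finset.mem_univ, true_and]
      constructor
      · rintro ⟨hr, m, hm, hrm⟩
        obtain ⟨D, hD, rfl⟩ := (hY m).1 hm
        obtain ⟨i, -, hi⟩ := (hr.prime.dvd_finset_prod_iff _).1 hrm
        by_cases h23 : r ∈ ({2, 3} : Finset ℕ)
        · exact Or.inl h23
        · right
          refine ⟨i, ?_⟩
          have a3 := hq5 i
          rw [hT]
          simp only [Finset.mem_union, Finset.mem_sdiff, Nat.mem_primeFactors, Finset.mem_singleton]
          rcases hX i _ (hD i) with h | h | h
          · exact Or.inr (Or.inl ⟨⟨hr, hi.trans h, by omega⟩, h23⟩)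
          · exact Or.inl (hpr i r hr (hi.trans h))
          · exact Or.inr (Or.inr ⟨⟨hr, hi.trans h, by omega⟩, h23⟩)
      · rintro (h | ⟨i, h⟩)
        · simp only [Finset.mem_insert, Finset.mem_singleton] at h
          rcases h with rfl | rfl
          · exact ⟨Nat.prime_two, e i0, hsingle i0 _ (heX i0), he2 i0⟩
          · exact ⟨Nat.prime_three, e i0, hsingle i0 _ (heX i0), he3 i0⟩
        · rw [hT] at h
          simp only [Finset.mem_union, Finset.mem_sdiff, Nat.mem_primeFactors, Finset.mem_singleton] at h
          rcases h with rfl | h | h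
          · exact ⟨hp i, q i, hsingle i _ (hXq i), hpq i⟩
          · exact ⟨h.1.1, _, hsingle i _ (hXm i), h.1.2.1⟩
          · exact ⟨h.1.1, _, hsingle i _ (hXp i), h.1.2.1⟩
    rw [hset, Set.ncard_coe_finset, Finset.card_union_of_disjoint, Finset.card_biUnion]
    · simp [hTcard]; ring
    · intro i _ j _ hij; exact hTdisj i j hij
    · rw [Finset.disjoint_biUnion_right]
      intro i _; exact hT23 i
  · have hub : ∀ m ∈ Y, m.primeFactors.card ≤ n + 2 := by
      intro m hm
      obtain ⟨D, hD, rfl⟩ := (hY m).1 hm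
      have hsub : (∏ i, D i).primeFactors ⊆ ({2, 3} : Finset ℕ) ∪
          Finset.univ.biUnion (fun i => (D i).primeFactors \ {2, 3}) := by
        intro r hr
        rw [Nat.mem_primeFactors] at hr
        obtain ⟨i, -, hi⟩ := (hr.1.prime.dvd_finset_prod_iff _).1 hr.2.1
        by_cases h23 : r ∈ ({2, 3} : Finset ℕ)
        · exact Finset.mem_union_left _ h23
        · apply Finset.mem_union_right
          rw [Finset.mem_biUnion]
          exact ⟨i, Finset.mem_univ _, Finset.mem_sdiff.2
            ⟨Nat.mem_primeFactors.2 ⟨hr.1, hi, hXne i _ (hD i)⟩, h23⟩⟩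
      have hone : ∀ i ∈ (Finset.univ : Finset (Fin n)), ((D i).primeFactors \ {2, 3}).card ≤ 1 := by
        intro i _
        have a3 := hq5 i
        rcases hX i _ (hD i) with h | h | h
        · rw [← hminus i]
          exact Finset.card_le_card (Finset.sdiff_subset_sdiff
            (Nat.primeFactors_mono h (by omega)) subset_rfl)
        · have : (D i).primeFactors \ {2, 3} ⊆ {p i} := by
            intro r hr
            rw [Finset.mem_sdiff, Nat.mem_primeFactors] at hr
            rw [Finset.mem_singleton]
            exact hpr i r hr.1.1 (hr.1.2.1.trans h)
          simpa using Finset.card_le_card this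
        · rw [← hplus i]
          exact Finset.card_le_card (Finset.sdiff_subset_sdiff
            (Nat.primeFactors_mono h (by omega)) subset_rfl)
      have hb := Finset.card_biUnion_le_card_mul Finset.univ
        (fun i => (D i).primeFactors \ {2, 3}) 1 hone
      have h1 := (Finset.card_le_card hsub).trans (Finset.card_union_le _ _)
      have h2 : ({2, 3} : Finset ℕ).card = 2 := rfl
      simp only [Finset.card_univ, Fintype.card_fin, mul_one] at hb
      omega
    apply IsGreatest.csSup_eq
    constructor
    · let D : Fin n → ℕ := Function.update q i0 (e i0)
      have hDX : ∀ i, D i ∈ X i := by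
        intro i
        by_cases h : i = i0
        · subst h; simpa [D] using heX i0
        · simpa [D, h] using hXq i
      have hr : ∀ i, ∃ r, r ∈ T i ∧ r.Prime ∧ r ∣ D i := by
        intro i
        by_cases h : i = i0
        · subst h
          have : ((e i0).primeFactors \ {2, 3}).card = 1 := by
            rcases he i0 with h | h
            · rw [h]; exact hminus i0
            · rw [h]; exact hplus i0
          obtain ⟨r, hr⟩ := Finset.card_pos.1 (by rw [this]; norm_num)
          have hr' := Nat.mem_primeFactors.1 (Finset.mem_sdiff.1 hr).1
          refine ⟨r, ?_, hr'.1, by simpa [D] using hr'.2.1⟩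
          rw [hT]
          rcases he i0 with h | h
          · rw [h] at hr
            exact Finset.mem_union_right _ (Finset.mem_union_left _ hr)
          · rw [h] at hr
            exact Finset.mem_union_right _ (Finset.mem_union_right _ hr)
        · refine ⟨p i, ?_, hp i, by simpa [D, h] using hpq i⟩
          rw [hT]
          exact Finset.mem_union_left _ (Finset.mem_singleton_self _)
      choose r hrT hrp hrd using hr
      have hinj : Function.Injective r := by
        intro i j hij
        by_contra hne
        exact Finset.disjoint_left.1 (hTdisj i j hne) (hrT i) (hij ▸ hrT j)
      have hmY : ∏ i, D i ∈ Y := (hY _).2 ⟨D, hDX, rfl⟩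
      have hne : ∏ i, D i ≠ 0 := Finset.prod_ne_zero_iff.2 fun i _ => hXne i _ (hDX i)
      have hDd : ∀ i, D i ∣ ∏ i, D i := fun i => Finset.dvd_prod_of_mem D (Finset.mem_univ i)
      have he0 : e i0 ∣ ∏ i, D i := by simpa [D] using hDd i0
      refine ⟨_, hmY, le_antisymm ?_ (hub _ hmY)⟩
      have hsub : ({2, 3} : Finset ℕ) ∪ Finset.univ.image r ⊆ (∏ i, D i).primeFactors := by
        intro s hs
        rw [Nat.mem_primeFactors]
        simp only [Finset.mem_union, Finset.mem_insert, Finset.mem_singleton, Finset.mem_image,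
          Finset.mem_univ, true_and] at hs
        rcases hs with (rfl | rfl) | ⟨i, rfl⟩
        · exact ⟨Nat.prime_two, (he2 i0).trans he0, hne⟩
        · exact ⟨Nat.prime_three, (he3 i0).trans he0, hne⟩
        · exact ⟨hrp i, (hrd i).trans (hDd i), hne⟩
      have hc := Finset.card_le_card hsub
      rw [Finset.card_union_of_disjoint, Finset.card_image_of_injective _ hinj] at hc
      · have h2 : ({2, 3} : Finset ℕ).card = 2 := rfl
        simp only [Finset.card_univ, Fintype.card_fin] at hc
        omega
      · rw [Finset.disjoint_left]
        intro s hs hs'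
        obtain ⟨i, -, rfl⟩ := Finset.mem_image.1 hs'
        exact Finset.disjoint_left.1 (hT23 i) hs (hrT i)
    · rintro k ⟨m, hm, rfl⟩
      exact hub m hm

end Final

theorem rho_sigma_of_product_PSL (n : ℕ) (hn : 1 ≤ n) (p f : Fin n → ℕ)
    (hp : ∀ i, (p i).Prime) (hp5 : ∀ i, 5 < p i) (hf : ∀ i, 1 ≤ f i)
    (F : Fin n → Type) [∀ i, Field (F i)] [∀ i, Fintype (F i)]
    (hF : ∀ i, Fintype.card (F i) = p i ^ f i)
    (hminus : ∀ i, (((p i ^ f i - 1).primeFactors) \ {2, 3}).card = 1)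
    (hplus : ∀ i, (((p i ^ f i + 1).primeFactors) \ {2, 3}).card = 1)
    (hdisj : ∀ r s : Fin n, r ≠ s →
      (insert (p r) ((p r ^ f r) ^ 2 - 1).primeFactors) ∩
        (insert (p s) ((p s ^ f s) ^ 2 - 1).primeFactors) = ({2, 3} : Finset ℕ)) :
    (rhoSet (∀ i : Fin n, Matrix.SpecialLinearGroup (Fin 2) (F i) ⧸
        Subgroup.center (Matrix.SpecialLinearGroup (Fin 2) (F i)))).ncard = 3 * n + 2 ∧
    sigmaVal (∀ i : Fin n, Matrix.SpecialLinearGroup (Fin 2) (F i) ⧸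
        Subgroup.center (Matrix.SpecialLinearGroup (Fin 2) (F i))) = n + 2 ∧
    (rhoSet (∀ i : Fin n, Matrix.SpecialLinearGroup (Fin 2) (F i) ⧸
        Subgroup.center (Matrix.SpecialLinearGroup (Fin 2) (F i)))).ncard =
      3 * sigmaVal (∀ i : Fin n, Matrix.SpecialLinearGroup (Fin 2) (F i) ⧸
        Subgroup.center (Matrix.SpecialLinearGroup (Fin 2) (F i))) - 4 := by
  have hdeg := fun i => psl_degrees (F i)
    (by
      rw [hF]
      exact lt_of_lt_of_le (hp5 i) (Nat.le_of_dvd (pow_pos (hp i).pos _)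
        (dvd_pow_self _ (by have := hf i; omega))))
    (by
      rw [hF]
      refine Nat.odd_iff.1 (Odd.pow ?_)
      exact (hp i).odd_of_ne_two (by have := hp5 i; omega))
  simp only [hF] at hdeg
  have main := combinatorics n hn p f hp hp5 hf hminus hplus hdisj
    (fun i => {d | HasDeg (Matrix.SpecialLinearGroup (Fin 2) (F i) ⧸
      Subgroup.center (Matrix.SpecialLinearGroup (Fin 2) (F i))) d})
    (fun i => hasDeg_one _) (fun i d hd => (hdeg i).1 d hd) (fun i => (hdeg i).2.1)
    (fun i => (hdeg i).2.2.1) (fun i => (hdeg i).2.2.2)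
    (charDegrees (∀ i : Fin n, Matrix.SpecialLinearGroup (Fin 2) (F i) ⧸
        Subgroup.center (Matrix.SpecialLinearGroup (Fin 2) (F i))))
    (fun d => by rw [mem_charDegrees_iff, hasDeg_pi]; rfl)
  have h1 : (rhoSet (∀ i : Fin n, Matrix.SpecialLinearGroup (Fin 2) (F i) ⧸
        Subgroup.center (Matrix.SpecialLinearGroup (Fin 2) (F i)))).ncard = 3 * n + 2 := main.1
  have h2 : sigmaVal (∀ i : Fin n, Matrix.SpecialLinearGroup (Fin 2) (F i) ⧸
        Subgroup.center (Matrix.SpecialLinearGroup (Fin 2) (F i))) = n + 2 := main.2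
  refine ⟨h1, h2, ?_⟩
  rw [h1, h2]
  omega
end

section
/- Let K be a finite group such that K/F(K) is nilpotent, where F(K) is the Fitting subgroup. Then there exists θ ∈ Irr(K) such that every prime dividing |K/F(K)| divides θ(1). -/
theorem aux_choose {G V : Type} [Group G] [Finite G] [CommGroup V] (φ : G →* MulAut V)
    (P : ℕ → Subgroup G) (π : Finset ℕ) :
    (∀ p ∈ π, (P p).Normal) →
    (∀ p ∈ π, ∃ (ν : V) (m : ℕ), ν ^ m = 1 ∧ Nat.Coprime m (Nat.card (P p)) ∧
      ∃ x ∈ P p, φ x ν ≠ ν) →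
    ∃ l : V, ∀ p ∈ π, ∃ x ∈ P p, φ x l ≠ l := by
  classical
  have := Fintype.ofFinite G
  induction π using Finset.induction_on with
  | empty => intro _ _; exact ⟨1, by simp⟩
  | insert p π hp ih =>
    intro hN hex
    obtain ⟨l, hl⟩ := ih (fun q hq => hN q (Finset.mem_insert_of_mem hq))
      (fun q hq => hex q (Finset.mem_insert_of_mem hq))
    by_cases hfix : ∃ x ∈ P p, φ x l ≠ l
    · refine ⟨l, fun q hq => ?_⟩
      rcases Finset.mem_insert.1 hq with rfl | hq
      · exact hfix
      · exact hl q hq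
    push Not at hfix
    obtain ⟨ν, m, hm, hco, x₀, hx₀, hx₀ν⟩ := hex p (Finset.mem_insert_self _ _)
    have hPN := hN p (Finset.mem_insert_self _ _)
    -- the norm map
    let e : V →* V := 
      { toFun := fun v => ∏ x : P p, φ (x : G) v
        map_one' := by simp
        map_mul' := by intro a b; simp [Finset.prod_mul_distrib] }
    have he : ∀ v, e v = ∏ x : P p, φ (x : G) v := fun v => rfl
    have heq : ∀ (g : G) (v : V), e (φ g v) = φ g (e v) := by
      intro g v
      rw [he, he, map_prod]
      refine Fintype.prod_equiv (MulAut.conjNormal g⁻¹).toEquiv _ _ ?_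
      intro x
      have : φ (x : G) (φ g v) = φ g (φ ((MulAut.conjNormal g⁻¹ x : P p) : G) v) := by
        rw [← MulAut.mul_apply, ← MulAut.mul_apply, ← map_mul, ← map_mul]
        congr 2
        simp [mul_assoc]
      exact this
    have hefix : ∀ v, (∀ x ∈ P p, φ x v = v) → e v = v ^ Nat.card (P p) := by
      intro v hv
      rw [he, Finset.prod_congr rfl (fun (x : P p) _ => hv (x : G) x.2)]
      simp
    have hefixed : ∀ v, ∀ x ∈ P p, φ x (e v) = e v := by
      intro v x hx
      rw [he, map_prod]
      refine Fintype.prod_equiv (Equiv.mulLeft (⟨x, hx⟩ : P p)) _ _ ?_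
      intro y
      simp
    set N := Nat.card (P p) with hNdef
    have hee : ∀ v, e (e v) = e v ^ N := fun v => hefix _ (hefixed v)
    set μ : V := ν ^ N * (e ν)⁻¹ with hμ
    have heμ : e μ = 1 := by
      rw [hμ, map_mul, map_pow, map_inv, hee]; simp
    have hμm : μ ^ m = 1 := by
      rw [hμ, mul_pow, inv_pow, ← map_pow, hm, ← pow_mul, mul_comm N m, pow_mul, hm]; simp
    have hcancel : ∀ (v : V) (g : G), φ g (v ^ m) = v ^ m → φ g (v ^ N) = v ^ N → φ g v = v := by
      intro v g h1 h2
      have h1' : (φ g v * v⁻¹) ^ m = 1 := by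
        rw [mul_pow, ← map_pow, h1, inv_pow, mul_inv_cancel]
      have h2' : (φ g v * v⁻¹) ^ N = 1 := by
        rw [mul_pow, ← map_pow, h2, inv_pow, mul_inv_cancel]
      have : orderOf (φ g v * v⁻¹) ∣ 1 := by
        rw [← hco]
        exact Nat.dvd_gcd (orderOf_dvd_of_pow_eq_one h1') (orderOf_dvd_of_pow_eq_one h2')
      have h3 := orderOf_eq_one_iff.1 (Nat.dvd_one.1 this)
      exact mul_inv_eq_one.1 h3
    refine ⟨l * μ, fun q hq => ?_⟩
    by_contra hcon
    push Not at hcon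
    rcases Finset.mem_insert.1 hq with rfl | hq
    · have hμfix : ∀ x ∈ P q, φ x μ = μ := by
        intro x hx
        have := hcon x hx
        rw [map_mul, hfix x hx] at this
        exact mul_left_cancel this
      have h1 : μ ^ N = 1 := by rw [← hefix μ hμfix, heμ]
      have h2 : orderOf μ ∣ 1 := by
        rw [← hco]
        exact Nat.dvd_gcd (orderOf_dvd_of_pow_eq_one hμm) (orderOf_dvd_of_pow_eq_one h1)
      have h3 : μ = 1 := orderOf_eq_one_iff.1 (Nat.dvd_one.1 h2)
      have h4 : ν ^ N = e ν := by
        rw [hμ] at h3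
        exact mul_inv_eq_one.1 h3
      apply hx₀ν
      apply hcancel
      · rw [hm, map_one]
      · rw [h4]; exact hefixed ν x₀ hx₀
    · obtain ⟨x, hx, hxl⟩ := hl q hq
      apply hxl
      apply hcancel
      · have : l ^ m = (l * μ) ^ m := by rw [mul_pow, hμm, mul_one]
        rw [this, map_pow, hcon x hx]
      · have : l ^ N = e (l * μ) := by rw [map_mul, heμ, mul_one, hefix l hfix]
        rw [this, ← heq, hcon x hx]

theorem aux_nongen {G : Type} [Group G] [Finite G] [Group.IsNilpotent G] (H : Subgroup G)
    (h : H ⊔ commutator G = ⊤) : H = ⊤ := by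
  by_contra hH
  obtain ⟨M, hM, hHM⟩ := (eq_top_or_exists_le_coatom H).resolve_left hH
  have hMn : M.Normal :=
    Subgroup.NormalizerCondition.normal_of_coatom M Group.normalizerCondition_of_isNilpotent hM
  have hnt : Nontrivial (G ⧸ M) := QuotientGroup.nontrivial_iff.2 hM.1
  have hc : Subgroup.center (G ⧸ M) ≠ ⊥ := Group.IsNilpotent.center_ne_bot _
  have hle : M ≤ (Subgroup.center (G ⧸ M)).comap (QuotientGroup.mk' M) := by
    intro x hx
    rw [Subgroup.mem_comap, QuotientGroup.mk'_apply, (QuotientGroup.eq_one_iff x).2 hx]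
    exact one_mem _
  have htop : (Subgroup.center (G ⧸ M)).comap (QuotientGroup.mk' M) = ⊤ := by
    rcases hM.le_iff.1 hle with h1 | h1
    · exact h1
    · exfalso
      apply hc
      rw [eq_bot_iff]
      intro y hy
      obtain ⟨x, rfl⟩ := QuotientGroup.mk'_surjective M y
      have : x ∈ M := by rw [← h1]; exact hy
      exact (QuotientGroup.eq_one_iff x).2 this
  have hcomm : commutator G ≤ M := by
    rw [← Subgroup.Normal.quotient_commutative_iff_commutator_le]
    refine ⟨⟨fun a b => ?_⟩⟩
    obtain ⟨x, rfl⟩ := QuotientGroup.mk'_surjective M a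
    have : x ∈ (Subgroup.center (G ⧸ M)).comap (QuotientGroup.mk' M) := by rw [htop]; trivial
    exact (Subgroup.mem_center_iff.1 this b).symm
  exact hM.1 (top_le_iff.1 (h ▸ sup_le hHM hcomm))

theorem aux_fitting {K : Type} [Group K] [Finite K] (F : Subgroup K)
    (hF : F = ⨆ (N : Subgroup K) (_ : N.Normal) (_ : Group.IsNilpotent N), N) :
    Group.IsNilpotent F := by
  classical
  let H : (Nat.card K).primeFactors → Subgroup K := fun p =>
    sSup {N : Subgroup K | N.Normal ∧ IsPGroup (p : ℕ) N}
  have hpr : ∀ p : (Nat.card K).primeFactors, Fact (p : ℕ).Prime := fun p =>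
    ⟨Nat.prime_of_mem_primeFactors p.2⟩
  have hHp : ∀ p : (Nat.card K).primeFactors, IsPGroup (p : ℕ) (H p) := fun p =>
    Sylow.sSup_of_normal _ (fun N hN => hN.2) (fun N hN => hN.1)
  have hHn : ∀ p, (H p).Normal := by
    intro p
    have : H p = ⨆ N : {N : Subgroup K // N.Normal ∧ IsPGroup (p : ℕ) N}, N.1 := by
      simp only [H, sSup_eq_iSup']; rfl
    rw [this]
    have : ∀ N : {N : Subgroup K // N.Normal ∧ IsPGroup (p : ℕ) N}, N.1.Normal := fun N => N.2.1
    infer_instance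
  have hcomm : Pairwise fun i j => ∀ (x y : K), x ∈ H i → y ∈ H j → Commute x y := by
    intro i j hij
    refine Subgroup.commute_of_normal_of_disjoint _ _ (hHn i) (hHn j) ?_
    exact IsPGroup.disjoint_of_ne (i : ℕ) (j : ℕ) (fun h => hij (Subtype.ext h)) _ _ (hHp i) (hHp j)
  have hnil : ∀ p, Group.IsNilpotent (H p) := fun p => (hHp p).isNilpotent
  have hsup : Group.IsNilpotent (⨆ p, H p : Subgroup K) := by
    rw [← Subgroup.noncommPiCoprod_range (hcomm := hcomm)]
    exact Group.nilpotent_of_surjective _ (Subgroup.noncommPiCoprod hcomm).rangeRestrict_surjective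
  have hle : F ≤ ⨆ p, H p := by
    rw [hF]
    refine iSup_le fun N => iSup_le fun hN => iSup_le fun hNn => ?_
    rw [← Subgroup.subgroupOf_eq_top, ← Subgroup.index_eq_one,
      Nat.eq_one_iff_not_exists_prime_dvd]
    intro p hp hdvd
    have := Fact.mk hp
    have hpK : p ∈ (Nat.card K).primeFactors := by
      refine Nat.mem_primeFactors.2 ⟨hp, ?_, Nat.card_pos.ne'⟩
      exact (hdvd.trans (Subgroup.index_dvd_card _)).trans (Subgroup.card_subgroup_dvd_card N)
    let Q : Sylow p N := default
    have hQc : (Q : Subgroup N).Characteristic := Q.characteristic_of_normal inferInstance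
    have hQn : ((Q : Subgroup N).map N.subtype).Normal := inferInstance
    have hQH : (Q : Subgroup N).map N.subtype ≤ H ⟨p, hpK⟩ :=
      le_sSup ⟨hQn, Q.isPGroup'.map _⟩
    have : (Q : Subgroup N) ≤ (⨆ p, H p).subgroupOf N := by
      rw [Subgroup.subgroupOf, ← Subgroup.map_le_iff_le_comap]
      exact hQH.trans (le_iSup H _)
    exact Q.not_dvd_index (hdvd.trans (Subgroup.index_dvd_of_le this))
  exact Group.nilpotent_of_mulEquiv (Subgroup.subgroupOfEquivOfLe hle)

theorem aux_crit {G : Type} [Group G] [Finite G] (p : ℕ) [Fact p.Prime] (N : Subgroup G)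
    [hNn : N.Normal] [Group.IsNilpotent N] (hp : IsPGroup p (G ⧸ N))
    (hχ : ∀ (χ : N →* ℂˣ) (m : ℕ), χ ^ m = 1 → Nat.Coprime m p → ∀ (g : G) (n : N),
      χ (MulAut.conjNormal g n) = χ n) : Group.IsNilpotent G := by
  obtain ⟨P₀⟩ : Nonempty (Sylow p N) := inferInstance
  obtain ⟨P, hP⟩ := P₀.exists_comap_subtype_eq
  let D : Subgroup N := P₀ ⊔ commutator N
  have hDn : D.Normal := Subgroup.Normal.of_commutator_le N le_sup_right
  -- Claim 1
  have h1 : ∀ (g : G) (n : N), MulAut.conjNormal g n * n⁻¹ ∈ D := by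
    intro g n
    have hcm : IsMulCommutative (N ⧸ D) :=
      Subgroup.Normal.quotient_commutative_iff_commutator_le.2 le_sup_right
    let _ : CommGroup (N ⧸ D) := { (inferInstance : Group (N ⧸ D)) with
      mul_comm := fun a b => hcm.is_comm.comm a b }
    by_contra hcon
    have hne : (QuotientGroup.mk' D (MulAut.conjNormal g n * n⁻¹)) ≠ 1 := fun h =>
      hcon ((QuotientGroup.eq_one_iff _).1 h)
    obtain ⟨χ, hχ1⟩ := CommGroup.exists_apply_ne_one_of_hasEnoughRootsOfUnity (N ⧸ D) ℂ hne
    apply hχ1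
    have h2 : ¬ p ∣ Nat.card (N ⧸ D) := by
      rw [← Subgroup.index_eq_card]
      exact fun h => P₀.not_dvd_index (h.trans (Subgroup.index_dvd_of_le le_sup_left))
    have h3 := hχ (χ.comp (QuotientGroup.mk' D)) (Nat.card (N ⧸ D)) (by
      ext x
      rw [MonoidHom.pow_apply, MonoidHom.comp_apply, ← map_pow, pow_card_eq_one']
      simp) ((Nat.Prime.coprime_iff_not_dvd Fact.out).2 h2).symm g n
    simp only [MonoidHom.comp_apply] at h3
    rw [map_mul, map_mul, h3, map_inv, map_inv, mul_inv_cancel]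
  have hC : ((commutator N).map N.subtype).Normal := inferInstance
  have hDle : D.map N.subtype ≤ (P : Subgroup G) ⊔ (commutator N).map N.subtype := by
    rw [Subgroup.map_sup]
    refine sup_le_sup_right ?_ _
    rw [Subgroup.map_le_iff_le_comap, hP]
  have hPN : (P : Subgroup G) ⊔ N = ⊤ := by
    rw [← Subgroup.index_eq_one, Nat.eq_one_iff_not_exists_prime_dvd]
    intro q hq hdvd
    have hqN := hdvd.trans (Subgroup.index_dvd_of_le (le_sup_right : N ≤ (P : Subgroup G) ⊔ N))
    obtain ⟨k, hk⟩ := IsPGroup.iff_card.1 hp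
    rw [Subgroup.index_eq_card, hk] at hqN
    have : q = p := (Nat.prime_dvd_prime_iff_eq hq Fact.out).1 (hq.dvd_of_dvd_pow hqN)
    subst this
    exact P.not_dvd_index (hdvd.trans (Subgroup.index_dvd_of_le le_sup_left))
  have hM : ((P : Subgroup G) ⊔ (commutator N).map N.subtype).Normal := by
    rw [← Subgroup.normalizer_eq_top_iff, ← top_le_iff, ← hPN]
    refine sup_le (le_sup_left.trans Subgroup.le_normalizer) ?_
    intro n hn
    refine Subgroup.mem_normalizer_fintype ?_
    intro y hy
    have : ((P : Subgroup G) ⊔ (commutator N).map N.subtype) ≤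
        ((P : Subgroup G) ⊔ (commutator N).map N.subtype).comap (MulAut.conj n).toMonoidHom := by
      refine sup_le ?_ ?_
      · intro x hx
        have h2 := hDle (Subgroup.mem_map_of_mem N.subtype (inv_mem (h1 x ⟨n, hn⟩)))
        have h3 := mul_mem h2 ((le_sup_left : (P : Subgroup G) ≤ (P : Subgroup G) ⊔ (commutator N).map N.subtype) hx)
        simpa [mul_assoc] using h3
      · intro x hx
        exact (le_sup_right : (commutator N).map N.subtype ≤ (P : Subgroup G) ⊔ (commutator N).map N.subtype)
          (hC.conj_mem x hx n)
    exact this hy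
  have hPnorm : (P : Subgroup G).Normal := by
    have h2 := Sylow.normalizer_sup_eq_top' P
      (le_sup_left : (P : Subgroup G) ≤ (P : Subgroup G) ⊔ (commutator N).map N.subtype)
    rw [← sup_assoc] at h2
    erw [sup_eq_left.2 (Subgroup.le_normalizer (H := (P : Subgroup G)))] at h2
    have h3 : (Subgroup.normalizer ((P : Subgroup G) : Set G)).subgroupOf N = ⊤ := by
      apply aux_nongen
      rw [← top_le_iff]
      intro n _
      have h4 : (n : G) ∈ (⊤ : Subgroup G) := trivial
      rw [← h2, Subgroup.mem_sup_of_normal_right] at h4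
      obtain ⟨y, hy, z, hz, hyz⟩ := h4
      obtain ⟨z, hz, rfl⟩ := hz
      have : n = (n * z⁻¹) * z := by simp
      rw [this]
      refine Subgroup.mul_mem_sup ?_ hz
      rw [Subgroup.mem_subgroupOf]
      have : ((n * z⁻¹ : N) : G) = y := by
        simp [← hyz]
      rw [this]; exact hy
    rw [← Subgroup.normalizer_eq_top_iff, ← top_le_iff, ← hPN]
    exact sup_le Subgroup.le_normalizer (Subgroup.subgroupOf_eq_top.1 h3)
  refine ((Group.isNilpotent_of_finite_tfae (G := G)).out 0 3).2 ?_
  intro q hq Q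
  by_cases hqp : q = p
  · subst hqp
    have := P.unique_of_normal hPnorm
    rw [Subsingleton.elim Q P]; exact hPnorm
  · have hQN : (Q : Subgroup G) ≤ N := by
      have h2 : IsPGroup q ((Q : Subgroup G).map (QuotientGroup.mk' N)) := Q.isPGroup'.map _
      have h3 : IsPGroup p ((Q : Subgroup G).map (QuotientGroup.mk' N)) := hp.to_subgroup _
      have h4 := IsPGroup.disjoint_of_ne q p hqp _ _ h2 h3
      rw [disjoint_self, Subgroup.map_eq_bot_iff, QuotientGroup.ker_mk'] at h4
      exact h4
    have hc : ((Q.subtype hQN : Sylow q N) : Subgroup N).Characteristic :=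
      Sylow.characteristic_of_normal _ inferInstance
    have : (((Q.subtype hQN : Sylow q N) : Subgroup N).map N.subtype).Normal := inferInstance
    rwa [Sylow.coe_subtype, Subgroup.subgroupOf_map_subtype, inf_of_le_left hQN] at this

theorem aux_simple {K W : Type} [Group K] [Finite K] [AddCommGroup W] [Module ℂ W]
    [Module.Finite ℂ W] (ρ : Representation ℂ K W) [ρ.IsIrreducible] :
    CategoryTheory.Simple (FDRep.of ρ) := by
  have : NeZero (Nat.card K : ℂ) := ⟨by exact_mod_cast Nat.card_pos.ne'⟩
  rw [FDRep.simple_iff_end_is_rank_one]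
  rw [← (FDRep.forget₂HomLinearEquiv (FDRep.of ρ) (FDRep.of ρ)).finrank_eq]
  rw [(Rep.homLinearEquiv _ _).finrank_eq]
  exact Representation.IsIrreducible.finrank_intertwiningMap_self ρ

theorem aux_irr {K : Type} [Group K] [Finite K] (F : Subgroup K) (l : F →* ℂˣ) :
    ∃ (W : Type) (_ : AddCommGroup W) (_ : Module ℂ W) (_ : Module.Finite ℂ W)
      (ρ : Representation ℂ K W) (v : W), ρ.IsIrreducible ∧ v ≠ 0 ∧
      ∀ f : F, ρ (f : K) v = ((l f : ℂˣ) : ℂ) • v := by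
  classical
  have := Fintype.ofFinite K
  let Good : ℕ → Prop := fun n =>
    ∃ (W : Type) (_ : AddCommGroup W) (_ : Module ℂ W) (_ : Module.Finite ℂ W)
      (ρ : Representation ℂ K W) (v : W), Module.finrank ℂ W = n ∧ v ≠ 0 ∧
      ∀ f : F, ρ (f : K) v = ((l f : ℂˣ) : ℂ) • v
  have hex : ∃ n, Good n := by
    let ρ : Representation ℂ K (K → ℂ) :=
      { toFun := fun g => LinearMap.funLeft ℂ ℂ (fun x => x * g)
        map_one' := by ext; simp [LinearMap.funLeft]
        map_mul' := by intro a b; ext; simp [LinearMap.funLeft, mul_assoc] }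
    let v : K → ℂ := fun x => if h : x ∈ F then ((l ⟨x, h⟩ : ℂˣ) : ℂ) else 0
    refine ⟨_, K → ℂ, inferInstance, inferInstance, inferInstance, ρ, v, rfl, ?_, ?_⟩
    · intro h
      have := congrFun h 1
      simp [v, one_mem] at this
    · intro f
      ext x
      change v (x * f) = ((l f : ℂˣ) : ℂ) * v x
      by_cases hx : x ∈ F
      · have hxf : x * f ∈ F := mul_mem hx f.2
        simp only [v, dif_pos hx, dif_pos hxf]
        have : (⟨x * f, hxf⟩ : F) = ⟨x, hx⟩ * f := rfl
        rw [this, map_mul, Units.val_mul, mul_comm]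
      · have hxf : x * f ∉ F := fun h => hx ((Subgroup.mul_mem_cancel_right F f.2).1 h)
        simp [v, dif_neg hx, dif_neg hxf]
  obtain ⟨W, i1, i2, i3, ρ, v, hW, hv, hρ⟩ := Nat.find_spec hex
  refine ⟨W, i1, i2, i3, ρ, v, ?_, hv, hρ⟩
  have hnt : Nontrivial (Subrepresentation ρ) := by
    refine ⟨⊥, ⊤, fun h => hv ?_⟩
    have : v ∈ (⊥ : Subrepresentation ρ).toSubmodule := by rw [h]; exact Submodule.mem_top
    exact this
  refine ⟨fun U => ?_⟩
  by_contra hU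
  push Not at hU
  have hUbot : U.toSubmodule ≠ ⊥ := fun h => hU.1 (Subrepresentation.toSubmodule_injective h)
  have hUtop : U.toSubmodule ≠ ⊤ := fun h => hU.2 (Subrepresentation.toSubmodule_injective h)
  by_cases hvU : v ∈ U.toSubmodule
  · have hlt : Module.finrank ℂ U.toSubmodule < Nat.find hex := by
      rw [← hW]; exact Submodule.finrank_lt hUtop
    refine Nat.find_min hex hlt ⟨U.toSubmodule, inferInstance, inferInstance, inferInstance,
      U.toRepresentation, ⟨v, hvU⟩, rfl, fun h => hv (congrArg Subtype.val h), fun f => ?_⟩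
    exact Subtype.ext (hρ f)
  · have hlt : Module.finrank ℂ (W ⧸ U.toSubmodule) < Nat.find hex := by
      rw [← hW]
      have h1 := Submodule.finrank_quotient_add_finrank U.toSubmodule
      have h2 : 0 < Module.finrank ℂ U.toSubmodule := by
        rw [Nat.pos_iff_ne_zero, Ne, Submodule.finrank_eq_zero]; exact hUbot
      omega
    refine Nat.find_min hex hlt ⟨W ⧸ U.toSubmodule, inferInstance, inferInstance, inferInstance,
      ρ.quotient U.toSubmodule (fun g w hw => U.apply_mem_toSubmodule g hw),
      U.toSubmodule.mkQ v, rfl, fun h => hvU ((Submodule.Quotient.mk_eq_zero _).1 h), fun f => ?_⟩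
    change U.toSubmodule.mkQ (ρ f v) = _
    rw [hρ f, map_smul]

theorem aux_clifford {K W : Type} [Group K] [Finite K] [AddCommGroup W] [Module ℂ W]
    [Module.Finite ℂ W] (ρ : Representation ℂ K W) [ρ.IsIrreducible] (F : Subgroup K) [F.Normal]
    (φ : K ⧸ F →* MulAut (F →* ℂˣ))
    (hφ : ∀ (k : K) (χ : F →* ℂˣ) (f : F), φ (k : K ⧸ F) χ f = χ (MulAut.conjNormal k⁻¹ f))
    (l : F →* ℂˣ) (v : W) (hv : v ≠ 0) (hl : ∀ f : F, ρ (f : K) v = ((l f : ℂˣ) : ℂ) • v)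
    (T : Subgroup (K ⧸ F)) (hT : ∀ g, g ∈ T ↔ φ g l = l) :
    T.index ∣ Module.finrank ℂ W := by
  classical
  have := Fintype.ofFinite K
  let E : (F →* ℂˣ) → Submodule ℂ W := fun χ =>
    { carrier := {w | ∀ f : F, ρ (f : K) w = ((χ f : ℂˣ) : ℂ) • w}
      add_mem' := by intro a b ha hb f; rw [map_add, ha f, hb f, smul_add]
      zero_mem' := by intro f; simp
      smul_mem' := by intro c a ha f; rw [map_smul, ha f, smul_comm] }
  have hE : ∀ χ w, w ∈ E χ ↔ ∀ f : F, ρ (f : K) w = ((χ f : ℂˣ) : ℂ) • w := fun _ _ => Iff.rfl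
  have hmove : ∀ (k : K) χ w, w ∈ E χ → ρ k w ∈ E (φ (k : K ⧸ F) χ) := by
    intro k χ w hw f
    have h1 := hw (MulAut.conjNormal k⁻¹ f)
    rw [hφ, ← map_smul, ← h1, ← Module.End.mul_apply, ← Module.End.mul_apply, ← map_mul, ← map_mul]
    congr 2
    simp [mul_assoc]
  have hinj : ∀ k : K, Function.Injective (ρ k) := by
    intro k a b hab
    have := congrArg (ρ k⁻¹) hab
    rwa [← Module.End.mul_apply, ← Module.End.mul_apply, ← map_mul, inv_mul_cancel, map_one] at this
  have hdim_le : ∀ (k : K) χ, Module.finrank ℂ (E χ) ≤ Module.finrank ℂ (E (φ (k : K ⧸ F) χ)) := by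
    intro k χ
    rw [(Submodule.equivMapOfInjective (ρ k) (hinj k) (E χ)).finrank_eq]
    refine Submodule.finrank_mono ?_
    rintro _ ⟨w, hw, rfl⟩
    exact hmove k χ w hw
  have hdim : ∀ (k : K) χ, Module.finrank ℂ (E (φ (k : K ⧸ F) χ)) = Module.finrank ℂ (E χ) := by
    intro k χ
    refine le_antisymm ?_ (hdim_le k χ)
    have := hdim_le k⁻¹ (φ (k : K ⧸ F) χ)
    rwa [← MulAut.mul_apply, ← map_mul, ← QuotientGroup.mk_mul, inv_mul_cancel, QuotientGroup.mk_one,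
      map_one] at this
  -- independence
  let pr : (F →* ℂˣ) → W →ₗ[ℂ] W := fun χ => ∑ f : F, (((χ f)⁻¹ : ℂˣ) : ℂ) • ρ (f : K)
  have hpr : ∀ χ χ' w, w ∈ E χ' → χ ≠ χ' → pr χ w = 0 := by
    intro χ χ' w hw hne
    have h1 : pr χ w = (∑ f : F, ((Units.coeHom ℂ).comp (χ⁻¹ * χ')) f) • w := by
      simp only [pr, LinearMap.sum_apply, LinearMap.smul_apply, Finset.sum_smul]
      refine Finset.sum_congr rfl fun f _ => ?_
      rw [hw f, smul_smul]
      simp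
    rw [h1, sum_hom_units_eq_zero, zero_smul]
    intro h
    apply hne
    ext f
    have := DFunLike.congr_fun h f
    have h3 : (χ f)⁻¹ * χ' f = 1 := Units.ext this
    rw [inv_mul_eq_one.1 h3]
  have hpr1 : ∀ χ w, w ∈ E χ → pr χ w = (Nat.card F : ℂ) • w := by
    intro χ w hw
    simp only [pr, LinearMap.sum_apply, LinearMap.smul_apply]
    rw [Finset.sum_congr rfl (fun f _ => by rw [hw f, smul_smul, ← Units.val_mul, inv_mul_cancel])]
    simp [Nat.cast_smul_eq_nsmul]
  have hind : iSupIndep E := by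
    intro χ
    rw [Submodule.disjoint_def]
    intro w hw hw'
    have h0 : (⨆ j, ⨆ (_ : j ≠ χ), E j) ≤ LinearMap.ker (pr χ) :=
      iSup_le fun j => iSup_le fun hj w hw => hpr χ j w hw hj.symm
    have h1 : pr χ w = 0 := h0 hw'
    rw [hpr1 χ w hw, smul_eq_zero] at h1
    exact h1.resolve_left (by exact_mod_cast Nat.card_pos.ne')
  let act : MulAction (K ⧸ F) (F →* ℂˣ) :=
    { smul := fun g χ => φ g χ
      one_smul := by intro χ; change φ 1 χ = χ; simp
      mul_smul := by intro a b χ; change φ (a * b) χ = φ a (φ b χ); simp }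
  let O := MulAction.orbit (K ⧸ F) l
  have hO : ∀ χ : O, ∃ k : K, φ (k : K ⧸ F) l = χ := by
    rintro ⟨χ, g, rfl⟩
    obtain ⟨k, rfl⟩ := QuotientGroup.mk_surjective g
    exact ⟨k, rfl⟩
  have hOmem : ∀ k : K, ∀ χ ∈ O, φ (k : K ⧸ F) χ ∈ O := by
    intro k χ hχ
    exact MulAction.mem_orbit_of_mem_orbit (k : K ⧸ F) hχ
  have hindO : iSupIndep (fun χ : O => E χ) := hind.comp Subtype.val_injective
  let U : Subrepresentation ρ :=
    { toSubmodule := ⨆ χ : O, E χ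
      apply_mem_toSubmodule := by
        intro k w hw
        have : (⨆ χ : O, E χ) ≤ (⨆ χ : O, E χ).comap (ρ k) := by
          refine iSup_le fun χ w hw => ?_
          exact (le_iSup (fun χ : O => E χ) ⟨_, hOmem k χ χ.2⟩) (hmove k χ w hw)
        exact this hw }
  have hvU : v ∈ U.toSubmodule :=
    (le_iSup (fun χ : O => E χ) ⟨l, MulAction.mem_orbit_self l⟩) hl
  have htop : (⨆ χ : O, E χ) = ⊤ := by
    rcases eq_bot_or_eq_top U with h | h
    · rw [h] at hvU
      exact (hv hvU).elim
    · exact congrArg Subrepresentation.toSubmodule h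
  have hFinO : Finite O := Set.finite_range _
  have := Fintype.ofFinite O
  have hint := DirectSum.isInternal_submodule_of_iSupIndep_of_iSup_eq_top hindO htop
  have hcard := Module.finrank_eq_card_basis
    (hint.collectedBasis (fun χ : O => Module.finBasis ℂ (E χ)))
  have hconst : ∀ χ : O, Module.finrank ℂ (E χ) = Module.finrank ℂ (E l) := by
    intro χ
    obtain ⟨k, hk⟩ := hO χ
    rw [← hk, hdim]
  have hTs : T = MulAction.stabilizer (K ⧸ F) l := by
    ext g
    rw [hT]; rfl
  rw [hcard, Fintype.card_sigma]
  simp only [Fintype.card_fin, hconst, Finset.sum_const, Finset.card_univ, smul_eq_mul]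
  rw [hTs, MulAction.index_stabilizer, ← Nat.card_coe_set_eq, Nat.card_eq_fintype_card]
  exact dvd_mul_right _ _

theorem aux_index {G : Type} [Group G] [Finite G] (p : ℕ) [Fact p.Prime] (P : Sylow p G)
    (hP : (P : Subgroup G).Normal) (T : Subgroup G) (hT : ¬ p ∣ T.index) :
    (P : Subgroup G) ≤ T := by
  have h1 : Nat.card P ∣ Nat.card T := by
    have h2 : Nat.card P ∣ Nat.card T * T.index := by
      rw [Subgroup.card_mul_index]; exact Subgroup.card_subgroup_dvd_card _
    obtain ⟨n, hn⟩ := IsPGroup.iff_card.1 P.isPGroup'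
    refine Nat.Coprime.dvd_of_dvd_mul_right ?_ h2
    rw [hn]
    exact Nat.Coprime.pow_left _ ((Nat.Prime.coprime_iff_not_dvd Fact.out).2 hT)
  obtain ⟨n, hn⟩ := IsPGroup.iff_card.1 P.isPGroup'
  rw [hn] at h1
  obtain ⟨A, hA⟩ := Sylow.exists_subgroup_card_pow_prime p h1
  have hAp : IsPGroup p (A.map T.subtype) := (IsPGroup.of_card hA).map _
  obtain ⟨Q, hQ⟩ := hAp.exists_le_sylow
  have := P.unique_of_normal hP
  rw [Subsingleton.elim Q P] at hQ
  have hcard : Nat.card P = Nat.card (A.map T.subtype) := by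
    rw [hn, ← hA]
    exact Nat.card_congr (A.equivMapOfInjective T.subtype T.subtype_injective).toEquiv
  have h3 := Subgroup.eq_of_le_of_card_ge hQ hcard.le
  rw [← h3]
  exact Subgroup.map_subtype_le A

theorem aux_exists {K : Type} [Group K] [Finite K] (F : Subgroup K) [F.Normal]
    (hFn : Group.IsNilpotent F)
    (hmax : ∀ N : Subgroup K, N.Normal → Group.IsNilpotent N → N ≤ F)
    (φ : K ⧸ F →* MulAut (F →* ℂˣ))
    (hφ : ∀ (k : K) (χ : F →* ℂˣ) (f : F), φ (k : K ⧸ F) χ f = χ (MulAut.conjNormal k⁻¹ f))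
    (p : ℕ) [Fact p.Prime] (hp : p ∣ Nat.card (K ⧸ F)) (P : Sylow p (K ⧸ F))
    (hP : (P : Subgroup (K ⧸ F)).Normal) :
    ∃ (ν : F →* ℂˣ) (m : ℕ), ν ^ m = 1 ∧ Nat.Coprime m (Nat.card P) ∧
      ∃ x ∈ (P : Subgroup (K ⧸ F)), φ x ν ≠ ν := by
  by_contra hcon
  push Not at hcon
  let S : Subgroup K := (P : Subgroup (K ⧸ F)).comap (QuotientGroup.mk' F)
  have hSn : S.Normal := inferInstance
  have hFS : F ≤ S := by
    intro x hx
    change QuotientGroup.mk' F x ∈ (P : Subgroup (K ⧸ F))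
    rw [QuotientGroup.mk'_apply, (QuotientGroup.eq_one_iff x).2 hx]
    exact one_mem _
  let e : F.subgroupOf S ≃* F := Subgroup.subgroupOfEquivOfLe hFS
  have hNnil : Group.IsNilpotent (F.subgroupOf S) := Group.nilpotent_of_mulEquiv e.symm
  have hpq : IsPGroup p (S ⧸ F.subgroupOf S) := by
    intro x
    obtain ⟨s, rfl⟩ := QuotientGroup.mk_surjective x
    obtain ⟨k, hk⟩ := P.isPGroup' ⟨QuotientGroup.mk' F s, s.2⟩
    refine ⟨k, ?_⟩
    have h1 : ((s ^ p ^ k : S) : K) ∈ F := by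
      have := congrArg Subtype.val hk
      rw [← QuotientGroup.eq_one_iff]
      exact this
    rw [← QuotientGroup.mk_pow]
    exact (QuotientGroup.eq_one_iff _).2 h1
  have hS : Group.IsNilpotent S := by
    refine aux_crit p (F.subgroupOf S) hpq ?_
    intro χ m hχ hm g n
    obtain ⟨k, hk⟩ := IsPGroup.iff_card.1 P.isPGroup'
    have h1 := hcon (χ.comp e.symm.toMonoidHom) m (by
      ext x
      have := DFunLike.congr_fun hχ (e.symm x)
      exact congrArg Units.val this) (by rw [hk]; exact hm.pow_right k)
      ((g⁻¹ : S) : K) (inv_mem g.2 : g⁻¹.1 ∈ S)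
    have h2 := DFunLike.congr_fun h1 (e n)
    rw [hφ] at h2
    simp only [MonoidHom.comp_apply] at h2
    have h3 : e.symm.toMonoidHom (e n) = n := e.symm_apply_apply n
    rw [h3] at h2
    rw [← h2]
    congr 1
    apply e.injective
    change _ = e (e.symm _)
    rw [e.apply_symm_apply]
    apply Subtype.ext
    simp [e]
  have hSF := hmax S hSn hS
  apply P.ne_bot_of_dvd_card hp
  rw [eq_bot_iff]
  intro y hy
  obtain ⟨x, rfl⟩ := QuotientGroup.mk'_surjective F y
  exact (QuotientGroup.eq_one_iff x).2 (hSF hy)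

theorem aux_action {K : Type} [Group K] (F : Subgroup K) [F.Normal] :
    ∃ φ : K ⧸ F →* MulAut (F →* ℂˣ), ∀ (k : K) (χ : F →* ℂˣ) (f : F),
      φ (k : K ⧸ F) χ f = χ (MulAut.conjNormal k⁻¹ f) := by
  let φ₀ : K →* MulAut (F →* ℂˣ) :=
    { toFun := fun k =>
        { toFun := fun χ => χ.comp (MulAut.conjNormal k⁻¹ : MulAut F).toMonoidHom
          invFun := fun χ => χ.comp (MulAut.conjNormal k : MulAut F).toMonoidHom
          left_inv := by intro χ; ext f; simp
          right_inv := by intro χ; ext f; simp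
          map_mul' := by intro χ χ'; ext f; simp }
      map_one' := by ext χ f; simp
      map_mul' := by intro a b; ext χ f; simp }
  refine ⟨QuotientGroup.lift F φ₀ ?_, ?_⟩
  · intro x hx
    ext χ f
    change ((χ (MulAut.conjNormal x⁻¹ f) : ℂˣ) : ℂ) = χ f
    have : MulAut.conjNormal x⁻¹ f = (⟨x, hx⟩ : F)⁻¹ * f * ⟨x, hx⟩ := by
      apply Subtype.ext; simp
    rw [this, map_mul, map_mul, map_inv, mul_comm, mul_inv_cancel_left]
  · intro k χ f
    rfl

/-- Let `K` be a finite group whose quotient by its Fitting subgroup `F`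
(the subgroup generated by all nilpotent normal subgroups, given here together
with its normality) is nilpotent. Then there is an irreducible character `θ` of
`K` (an irreducible complex representation) whose degree is divisible by every
prime dividing `|K/F(K)|`. -/
theorem exists_irreducible_degree_divisible (K : Type) [Group K] [Finite K]
    (F : Subgroup K) [F.Normal]
    (hF : F = ⨆ (N : Subgroup K) (_ : N.Normal) (_ : Group.IsNilpotent N), N)
    (hnil : Group.IsNilpotent (K ⧸ F)) :
    ∃ V : FDRep ℂ K, CategoryTheory.Simple V ∧
      (Nat.card (K ⧸ F)).primeFactors ⊆ (Module.finrank ℂ V).primeFactors := by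
  classical
  have hFn := aux_fitting F hF
  have hmax : ∀ N : Subgroup K, N.Normal → Group.IsNilpotent N → N ≤ F := by
    intro N hN hNn
    rw [hF]
    exact le_iSup_of_le N (le_iSup_of_le hN (le_iSup_of_le hNn le_rfl))
  obtain ⟨φ, hφ⟩ := aux_action F
  let Q : (p : ℕ) → Sylow p (K ⧸ F) := fun p => Classical.arbitrary _
  have hQ : ∀ p, p.Prime → (Q p : Subgroup (K ⧸ F)).Normal := by
    intro p hp
    have := Fact.mk hp
    infer_instance
  obtain ⟨l, hl⟩ := aux_choose (G := K ⧸ F) (V := F →* ℂˣ) φ (fun p => (Q p : Subgroup (K ⧸ F)))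
    (Nat.card (K ⧸ F)).primeFactors
    (fun p hp => hQ p (Nat.prime_of_mem_primeFactors hp))
    (fun p hp => by
      have := Fact.mk (Nat.prime_of_mem_primeFactors hp)
      exact aux_exists F hFn hmax φ hφ p (Nat.dvd_of_mem_primeFactors hp) (Q p)
        (hQ p (Nat.prime_of_mem_primeFactors hp)))
  obtain ⟨W, i1, i2, i3, ρ, v, hirr, hv, hρ⟩ := aux_irr F l
  let T : Subgroup (K ⧸ F) :=
    { carrier := {g | φ g l = l}
      mul_mem' := by
        intro a b ha hb
        change φ (a * b) l = l
        rw [map_mul, MulAut.mul_apply, hb, ha]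
      one_mem' := by simp
      inv_mem' := by
        intro a ha
        change φ a⁻¹ l = l
        have ha' : φ a l = l := ha
        conv_lhs => rw [← ha']
        rw [← MulAut.mul_apply, ← map_mul, inv_mul_cancel, map_one, MulAut.one_apply] }
  have hdvd := aux_clifford ρ F φ hφ l v hv hρ T (fun g => Iff.rfl)
  refine ⟨FDRep.of ρ, aux_simple ρ, ?_⟩
  change (Nat.card (K ⧸ F)).primeFactors ⊆ (Module.finrank ℂ W).primeFactors
  intro p hp
  have hpp := Nat.prime_of_mem_primeFactors hp
  have := Fact.mk hpp
  have hnt : Nontrivial W := ⟨v, 0, hv⟩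
  refine Nat.mem_primeFactors.2 ⟨hpp, ?_, Module.finrank_pos.ne'⟩
  refine dvd_trans ?_ hdvd
  by_contra hcon
  obtain ⟨x, hx, hxl⟩ := hl p hp
  exact hxl (aux_index p (Q p) (hQ p hpp) T hcon hx)
end
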